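/- arXiv:1310.6711 — 2 statements merged into one kernel-verified Lean document; each statement's English description precedes it below -/
import Mathlib

section
/- Let n ≥ 2, let σ ∈ (−∞, 1/2) ∪ (1, +∞), and let Ω = ℝⁿ \ Ḡ, where G is a convex domain in ℝⁿ. Let u be a solution of the Lamé system Δu + (1−2σ)^{−1} grad div u = 0 in Ω of class C²(Ω) ∩ C_b(Ω̄). Then for every point x ∈ Ω, |div u(x)| ≤ ((1−2σ) E_n / ((3−4σ) d_x)) · sup_Ω |u|, where E_n = (4 ω_{n−1} / ω_n) ∫₀^{π/2} [1 + n(n−2) cos²θ]^{1/2} sin^{n−2}θ dθ. -/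
open MeasureTheory Real Filter Metric
open scoped Real RealInnerProductSpace

noncomputable section

/-- `Eu n` is the Euclidean space `ℝⁿ`. -/
abbrev Eu (n : ℕ) := EuclideanSpace ℝ (Fin n)

/-- `ω_n`: the surface area of the unit sphere `S^{n-1}` in `ℝⁿ`,
given by the classical formula `2 π^{n/2} / Γ(n/2)`. -/
def sphereArea (n : ℕ) : ℝ := 2 * π ^ ((n : ℝ) / 2) / Real.Gamma ((n : ℝ) / 2)

/-- The divergence `div u(x) = ∑ⱼ ∂uⱼ/∂xⱼ (x)` of a vector field `u : ℝⁿ → ℝⁿ`. -/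
def divg {n : ℕ} (u : Eu n → Eu n) (x : Eu n) : ℝ :=
  ∑ j, fderiv ℝ (fun y => u y j) x (EuclideanSpace.single j 1)

/-- The Laplacian of a scalar function at a point: the sum of the pure second
partial derivatives in the coordinate directions. -/
def lapl {n : ℕ} (u : Eu n → ℝ) (x : Eu n) : ℝ :=
  ∑ i, fderiv ℝ (fun y => fderiv ℝ u y (EuclideanSpace.single i 1)) x
    (EuclideanSpace.single i 1)

/-- The constant `E_n = (4 ω_{n-1}/ω_n) ∫₀^{π/2} (1 + n(n-2) cos²θ)^{1/2} sin^{n-2}θ dθ`. -/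
def Econst (n : ℕ) : ℝ :=
  (4 * sphereArea (n - 1) / sphereArea n) *
    ∫ θ in (0:ℝ)..(π / 2),
      Real.sqrt (1 + (n : ℝ) * ((n : ℝ) - 2) * Real.cos θ ^ 2) * Real.sin θ ^ (n - 2)

/-!
For `k = (1 - 2σ)⁻¹ > -1` the bound is first proved at the point `e₀` of the half-space `{y₀ ≥ 0}`.
Let `P` be the field of a charge at `e₀`, smoothed out on a small ball: `P` is a gradient and
`div P` is supported in that ball.  From `P` and its reflection one builds a field `W` that vanishes
on `{y₀ = 0}` and has `ΔW + k grad div W` proportional to `grad div P`.  Green's formula for the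
Lamé operator, applied to `u` and `W`, then gives
`(2 + k) ∫ div u div P = 4 ∫_{y₀ = 0} ∑ᵢ uᵢ ∂₀Pᵢ`.
Letting the ball shrink, the left side tends to `(2 + k) ω_n div u(e₀)`; Cauchy–Schwarz in the
right-hand integrand and polar coordinates with `|y| = tan θ` produce the constant `E_n`.

The complement of a closed convex set contains, for each of its points `x`, an open half-space at
distance `|x - p| ≥ d_x` from `x`, where `p` is the projection of `x` onto the convex set.  A
similarity carries a slightly smaller half-space to `{y₀ ≥ 0}` and `x` to `e₀`.
-/

open scoped ContDiff Topology

section PartialDerivatives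

variable {n : ℕ} {f g : Eu n → ℝ} {y : Eu n}

/-- The partial derivative `∂f/∂xᵢ` at `y`. -/
def pderiv (i : Fin n) (f : Eu n → ℝ) (y : Eu n) : ℝ :=
  fderiv ℝ f y (EuclideanSpace.single i 1)

/-- The divergence of a vector field encoded as the family `g` of its components. -/
def fieldDiv (g : Fin n → Eu n → ℝ) (y : Eu n) : ℝ := ∑ j, pderiv j (g j) y

/-- The `i`-th component of `Δg + k grad div g` for a field `g` encoded as the family of its
components. -/
def lameOp (k : ℝ) (g : Fin n → Eu n → ℝ) (i : Fin n) (y : Eu n) : ℝ :=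
  lapl (g i) y + k * pderiv i (fieldDiv g) y

lemma lapl_eq_sum_pderiv (f : Eu n → ℝ) (y : Eu n) :
    lapl f y = ∑ i, pderiv i (pderiv i f) y := rfl

lemma pderiv_const (i : Fin n) (c : ℝ) : pderiv i (fun _ : Eu n => c) = 0 := by
  ext y; simp [pderiv]

lemma pderiv_add (i : Fin n) (hf : DifferentiableAt ℝ f y) (hg : DifferentiableAt ℝ g y) :
    pderiv i (fun z => f z + g z) y = pderiv i f y + pderiv i g y := by
  simp [pderiv, fderiv_fun_add hf hg]

lemma pderiv_sub (i : Fin n) (hf : DifferentiableAt ℝ f y) (hg : DifferentiableAt ℝ g y) :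
    pderiv i (fun z => f z - g z) y = pderiv i f y - pderiv i g y := by
  simp [pderiv, fderiv_fun_sub hf hg]

lemma pderiv_mul (i : Fin n) (hf : DifferentiableAt ℝ f y) (hg : DifferentiableAt ℝ g y) :
    pderiv i (fun z => f z * g z) y = pderiv i f y * g y + f y * pderiv i g y := by
  simp [pderiv, fderiv_fun_mul hf hg]; ring

lemma pderiv_const_mul (i : Fin n) (c : ℝ) (hf : DifferentiableAt ℝ f y) :
    pderiv i (fun z => c * f z) y = c * pderiv i f y := by
  simp [pderiv, fderiv_const_mul hf]

lemma pderiv_sum {ι : Type*} (s : Finset ι) (i : Fin n) {F : ι → Eu n → ℝ}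
    (hF : ∀ j ∈ s, DifferentiableAt ℝ (F j) y) :
    pderiv i (fun z => ∑ j ∈ s, F j z) y = ∑ j ∈ s, pderiv i (F j) y := by
  simp [pderiv, fderiv_fun_sum hF]

lemma pderiv_coord (i j : Fin n) (y : Eu n) :
    pderiv i (fun z => z j) y = if i = j then 1 else 0 := by
  have hproj : (fun z : Eu n => z j) = (EuclideanSpace.proj j : Eu n →L[ℝ] ℝ) := rfl
  rw [pderiv, hproj, ContinuousLinearMap.fderiv]
  simp [eq_comm]

lemma pderiv_comp_sub (i : Fin n) (f : Eu n → ℝ) (a : Eu n) :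
    pderiv i (fun z => f (z - a)) = fun y => pderiv i f (y - a) := by
  ext y; simp [pderiv, fderiv_comp_sub]

lemma pderiv_comp_smul (i : Fin n) (f : Eu n → ℝ) (c : ℝ) :
    pderiv i (fun z => f (c • z)) = fun y => c * pderiv i f (c • y) := by
  ext y; simp [pderiv, fderiv_comp_smul]

lemma pderiv_congr (i : Fin n) (h : f =ᶠ[𝓝 y] g) : pderiv i f =ᶠ[𝓝 y] pderiv i g := by
  filter_upwards [h.eventuallyEq_nhds] with z hz
  simp only [pderiv, hz.fderiv_eq]

lemma lapl_congr (h : f =ᶠ[𝓝 y] g) : lapl f y = lapl g y :=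
  Finset.sum_congr rfl fun i _ => (pderiv_congr i (pderiv_congr i h)).eq_of_nhds

lemma fieldDiv_congr {g h : Fin n → Eu n → ℝ} (hgh : ∀ i, g i =ᶠ[𝓝 y] h i) :
    fieldDiv g =ᶠ[𝓝 y] fieldDiv h := by
  filter_upwards [eventually_all.2 fun i => pderiv_congr i (hgh i)] with z hz
  exact Finset.sum_congr rfl fun i _ => hz i

lemma lameOp_congr (k : ℝ) {g h : Fin n → Eu n → ℝ} (hgh : ∀ i, g i =ᶠ[𝓝 y] h i) (i : Fin n) :
    lameOp k g i y = lameOp k h i y := by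
  rw [lameOp, lameOp, lapl_congr (hgh i), (pderiv_congr i (fieldDiv_congr hgh)).eq_of_nhds]

lemma pderiv_eventuallyEq_zero (i : Fin n) (h : f =ᶠ[𝓝 y] 0) : pderiv i f =ᶠ[𝓝 y] 0 :=
  (pderiv_congr i h).trans (pderiv_const i 0).eventuallyEq

lemma hasCompactSupport_pderiv (i : Fin n) (hf : HasCompactSupport f) :
    HasCompactSupport (pderiv i f) :=
  hf.fderiv_apply (𝕜 := ℝ) (EuclideanSpace.single i 1)

lemma contDiffAt_pderiv (i : Fin n) {a b : WithTop ℕ∞} (hf : ContDiffAt ℝ b f y)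
    (hab : a + 1 ≤ b) : ContDiffAt ℝ a (pderiv i f) y :=
  (hf.fderiv_right hab).clm_apply contDiffAt_const

@[fun_prop]
lemma contDiff_pderiv (i : Fin n) (hf : ContDiff ℝ ∞ f) : ContDiff ℝ ∞ (pderiv i f) :=
  (hf.fderiv_right (by simp)).clm_apply contDiff_const

@[fun_prop]
lemma contDiff_fieldDiv {P : Fin n → Eu n → ℝ} (hP : ∀ i, ContDiff ℝ ∞ (P i)) :
    ContDiff ℝ ∞ (fieldDiv P) :=
  ContDiff.sum fun j _ => contDiff_pderiv j (hP j)

lemma contDiffAt_fieldDiv {g : Fin n → Eu n → ℝ} (hg : ∀ i, ContDiffAt ℝ 2 (g i) y) :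
    ContDiffAt ℝ 1 (fieldDiv g) y :=
  ContDiffAt.sum fun j _ => contDiffAt_pderiv j (hg j) (by norm_num)

lemma pderiv_comm (i j : Fin n) (hf : ContDiffAt ℝ 2 f y) :
    pderiv i (pderiv j f) y = pderiv j (pderiv i f) y := by
  have hdiff : DifferentiableAt ℝ (fderiv ℝ f) y :=
    (hf.fderiv_right (m := 1) (by norm_num)).differentiableAt (by norm_num)
  have hsnd (a b : Fin n) : pderiv a (pderiv b f) y =
      fderiv ℝ (fderiv ℝ f) y (EuclideanSpace.single a 1) (EuclideanSpace.single b 1) := by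
    unfold pderiv
    rw [fderiv_clm_apply hdiff (differentiableAt_const _)]
    simp
  rw [hsnd, hsnd]
  exact (hf.isSymmSndFDerivAt (by simp)).eq _ _

end PartialDerivatives

section SmoothFields

variable {n : ℕ} {f g χ : Eu n → ℝ} {P : Fin n → Eu n → ℝ}

lemma differentiableAt_of_smooth (hf : ContDiff ℝ ∞ f) (y : Eu n) : DifferentiableAt ℝ f y :=
  hf.differentiable (by simp) y

lemma pderiv_pderiv_comm (i j : Fin n) (hf : ContDiff ℝ ∞ f) :
    pderiv i (pderiv j f) = pderiv j (pderiv i f) :=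
  funext fun _ => pderiv_comm i j (hf.of_le ENat.LEInfty.out).contDiffAt

lemma pderiv_pderiv_mul (i j : Fin n) (hf : ContDiff ℝ ∞ f) (hg : ContDiff ℝ ∞ g) (y : Eu n) :
    pderiv i (pderiv j fun z => f z * g z) y =
      f y * pderiv i (pderiv j g) y + (pderiv i f y * pderiv j g y + pderiv j f y * pderiv i g y
        + pderiv i (pderiv j f) y * g y) := by
  have hj : pderiv j (fun z => f z * g z) = fun z => pderiv j f z * g z + f z * pderiv j g z :=
    funext fun z => pderiv_mul j (differentiableAt_of_smooth hf z) (differentiableAt_of_smooth hg z)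
  have hdiff {h : Eu n → ℝ} (hh : ContDiff ℝ ∞ h) := differentiableAt_of_smooth hh y
  rw [hj, pderiv_add i (hdiff (by fun_prop)) (hdiff (by fun_prop)),
    pderiv_mul i (hdiff (by fun_prop)) (hdiff hg), pderiv_mul i (hdiff hf) (hdiff (by fun_prop))]
  ring

lemma pderiv_fieldDiv (hP : ∀ i, ContDiff ℝ ∞ (P i)) (i : Fin n) (y : Eu n) :
    pderiv i (fieldDiv P) y = ∑ j, pderiv i (pderiv j (P j)) y :=
  pderiv_sum _ i fun j _ => differentiableAt_of_smooth (contDiff_pderiv j (hP j)) y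

lemma lameOp_eq_sum (k : ℝ) (hP : ∀ i, ContDiff ℝ ∞ (P i)) (i : Fin n) (y : Eu n) :
    lameOp k P i y = ∑ j, (pderiv j (pderiv j (P i)) y + k * pderiv i (pderiv j (P j)) y) := by
  rw [lameOp, lapl_eq_sum_pderiv, pderiv_fieldDiv hP, Finset.mul_sum, Finset.sum_add_distrib]

/-- The terms of `∂ᵢ∂ⱼ(χw)` in which `χ` is differentiated. -/
def leibnizRemainder (χ w : Eu n → ℝ) (i j : Fin n) (y : Eu n) : ℝ :=
  pderiv i χ y * pderiv j w y + pderiv j χ y * pderiv i w y + pderiv i (pderiv j χ) y * w y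

lemma lameOp_mul (k : ℝ) (hχ : ContDiff ℝ ∞ χ) (hP : ∀ i, ContDiff ℝ ∞ (P i))
    (i : Fin n) (y : Eu n) :
    lameOp k (fun i z => χ z * P i z) i y = χ y * lameOp k P i y
      + ∑ j, (leibnizRemainder χ (P i) j j y + k * leibnizRemainder χ (P j) i j y) := by
  rw [lameOp_eq_sum k (fun i => by fun_prop), lameOp_eq_sum k hP, Finset.mul_sum,
    ← Finset.sum_add_distrib]
  refine Finset.sum_congr rfl fun j _ => ?_
  rw [pderiv_pderiv_mul j j hχ (hP i), pderiv_pderiv_mul i j hχ (hP j)]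
  simp only [leibnizRemainder]
  ring

lemma lapl_add (hf : ContDiff ℝ ∞ f) (hg : ContDiff ℝ ∞ g) (y : Eu n) :
    lapl (fun z => f z + g z) y = lapl f y + lapl g y := by
  simp only [lapl_eq_sum_pderiv, ← Finset.sum_add_distrib]
  refine Finset.sum_congr rfl fun j _ => ?_
  rw [← pderiv_add j (differentiableAt_of_smooth (by fun_prop) y)
    (differentiableAt_of_smooth (by fun_prop) y)]
  congr 1
  exact funext fun z =>
    pderiv_add j (differentiableAt_of_smooth hf z) (differentiableAt_of_smooth hg z)

lemma lapl_sub (hf : ContDiff ℝ ∞ f) (hg : ContDiff ℝ ∞ g) (y : Eu n) :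
    lapl (fun z => f z - g z) y = lapl f y - lapl g y := by
  simp only [lapl_eq_sum_pderiv, ← Finset.sum_sub_distrib]
  refine Finset.sum_congr rfl fun j _ => ?_
  rw [← pderiv_sub j (differentiableAt_of_smooth (by fun_prop) y)
    (differentiableAt_of_smooth (by fun_prop) y)]
  congr 1
  exact funext fun z =>
    pderiv_sub j (differentiableAt_of_smooth hf z) (differentiableAt_of_smooth hg z)

lemma lapl_const_mul (c : ℝ) (hf : ContDiff ℝ ∞ f) (y : Eu n) :
    lapl (fun z => c * f z) y = c * lapl f y := by
  simp only [lapl_eq_sum_pderiv, Finset.mul_sum]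
  refine Finset.sum_congr rfl fun j _ => ?_
  rw [← pderiv_const_mul j c (differentiableAt_of_smooth (by fun_prop) y)]
  congr 1
  exact funext fun z => pderiv_const_mul j c (differentiableAt_of_smooth hf z)

lemma lapl_coord_mul (i : Fin n) (hf : ContDiff ℝ ∞ f) (y : Eu n) :
    lapl (fun z => z i * f z) y = 2 * pderiv i f y + y i * lapl f y := by
  have hcoord (j : Fin n) : pderiv j (fun z : Eu n => z i) = fun _ => if j = i then 1 else 0 :=
    funext fun z => pderiv_coord j i z
  simp only [lapl_eq_sum_pderiv, pderiv_pderiv_mul _ _ (f := fun z : Eu n => z i) (by fun_prop) hf,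
    hcoord, pderiv_const, Finset.sum_add_distrib, ite_mul, one_mul, zero_mul, Pi.zero_apply,
    Finset.sum_ite_eq', Finset.mem_univ, if_true, ← Finset.mul_sum, Finset.sum_const_zero]
  ring

lemma lapl_pderiv (i : Fin n) (hf : ContDiff ℝ ∞ f) (y : Eu n) :
    lapl (pderiv i f) y = pderiv i (lapl f) y := by
  have hlapl : lapl f = fun z => ∑ j, pderiv j (pderiv j f) z := rfl
  rw [lapl_eq_sum_pderiv, hlapl,
    pderiv_sum _ _ fun j _ => differentiableAt_of_smooth (by fun_prop) y]
  refine Finset.sum_congr rfl fun j _ => ?_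
  rw [pderiv_pderiv_comm j i hf, pderiv_pderiv_comm j i (by fun_prop)]

lemma lapl_eq_pderiv_fieldDiv (hP : ∀ i, ContDiff ℝ ∞ (P i))
    (hcurl : ∀ i j, pderiv i (P j) = pderiv j (P i)) (i : Fin n) :
    lapl (P i) = pderiv i (fieldDiv P) := by
  ext y
  rw [lapl_eq_sum_pderiv, pderiv_fieldDiv hP]
  refine Finset.sum_congr rfl fun j _ => ?_
  rw [hcurl j i, pderiv_pderiv_comm j i (hP j)]

end SmoothFields

section HalfSpace

variable {N : ℕ}

/-- The closed half-space `{y ∈ ℝ^{N+1} : y₀ ≥ 0}`. -/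
def halfSpace (N : ℕ) : Set (Eu (N + 1)) := {y | 0 ≤ y 0}

/-- The inclusion of `ℝᴺ` as the boundary hyperplane `{y₀ = 0}` of the half-space. -/
def boundaryPoint (y : Eu N) : Eu (N + 1) := WithLp.toLp 2 (Fin.cons 0 y)

lemma isClosed_halfSpace : IsClosed (halfSpace N) :=
  isClosed_le continuous_const (by fun_prop)

lemma measurableSet_halfSpace : MeasurableSet (halfSpace N) := isClosed_halfSpace.measurableSet

@[simp]
lemma boundaryPoint_zero (y : Eu N) : boundaryPoint y 0 = 0 := rfl

@[simp]
lemma boundaryPoint_succ (y : Eu N) (i : Fin N) : boundaryPoint y i.succ = y i := rfl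

lemma boundaryPoint_mem_halfSpace (y : Eu N) : boundaryPoint y ∈ halfSpace N :=
  (boundaryPoint_zero y).ge

@[fun_prop]
lemma continuous_boundaryPoint : Continuous (boundaryPoint : Eu N → Eu (N + 1)) := by
  unfold boundaryPoint
  fun_prop

@[simp]
lemma norm_boundaryPoint (y : Eu N) : ‖boundaryPoint y‖ = ‖y‖ := by
  simp [EuclideanSpace.norm_eq, Fin.sum_univ_succ]

lemma abs_coord_le_norm {n : ℕ} (y : Eu n) (i : Fin n) : |y i| ≤ ‖y‖ := by
  simpa using PiLp.norm_apply_le y i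

lemma pderiv_eq_zero_of_lt_norm {n : ℕ} {f : Eu n → ℝ} {R : ℝ} (h0 : ∀ y, R ≤ ‖y‖ → f y = 0)
    (i : Fin n) {y : Eu n} (hy : R < ‖y‖) : pderiv i f y = 0 := by
  refine (pderiv_eventuallyEq_zero i ?_).eq_of_nhds
  filter_upwards [continuous_norm.continuousAt.eventually (lt_mem_nhds hy)] with z hz
  exact h0 z hz.le

/-- The box `[0, R] × [-R, R]ᴺ`, in coordinates. -/
def halfBox (N : ℕ) (R : ℝ) : Set (Fin (N + 1) → ℝ) :=
  Set.Icc (Fin.cons 0 fun _ => -R) fun _ => R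

lemma mem_halfBox_iff {R : ℝ} {z : Fin (N + 1) → ℝ} :
    z ∈ halfBox N R ↔ 0 ≤ z 0 ∧ z 0 ≤ R ∧ ∀ i : Fin N, |z i.succ| ≤ R := by
  simp only [halfBox, Set.mem_Icc, Pi.le_def, Fin.forall_fin_succ, Fin.cons_zero, Fin.cons_succ,
    abs_le, forall_and]
  tauto

lemma mem_halfBox_of_norm_le {R : ℝ} {z : Fin (N + 1) → ℝ} (hz : 0 ≤ z 0)
    (hR : ‖(WithLp.toLp 2 z : Eu (N + 1))‖ ≤ R) : z ∈ halfBox N R := by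
  have hcoord (i : Fin (N + 1)) : |z i| ≤ R :=
    (abs_coord_le_norm (WithLp.toLp 2 z : Eu (N + 1)) i).trans hR
  exact mem_halfBox_iff.2 ⟨hz, (abs_le.1 (hcoord 0)).2, fun i => hcoord i.succ⟩

lemma setIntegral_halfSpace_eq_halfBox {f : Eu (N + 1) → ℝ} {R : ℝ}
    (h0 : ∀ y, R < ‖y‖ → f y = 0) :
    ∫ y in halfSpace N, f y = ∫ z in halfBox N R, f (WithLp.toLp 2 z) := by
  rw [← (PiLp.volume_preserving_toLp (Fin (N + 1))).setIntegral_preimage_emb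
    (MeasurableEquiv.toLp 2 (Fin (N + 1) → ℝ)).measurableEmbedding]
  refine setIntegral_eq_of_subset_of_forall_sdiff_eq_zero
    ((PiLp.volume_preserving_toLp _).measurable measurableSet_halfSpace)
    (fun z hz => (mem_halfBox_iff.1 hz).1) fun z hz => h0 _ ?_
  contrapose! hz
  exact fun ⟨hpos, hnot⟩ => hnot (mem_halfBox_of_norm_le hpos hz)

lemma integral_boundaryPoint (f : Eu (N + 1) → ℝ) :
    ∫ y : Eu N, f (boundaryPoint y) =
      ∫ x : Fin N → ℝ, f (WithLp.toLp 2 (Fin.insertNth 0 0 x)) := by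
  rw [← (PiLp.volume_preserving_toLp (Fin N)).integral_comp
    (MeasurableEquiv.toLp 2 (Fin N → ℝ)).measurableEmbedding]
  simp [boundaryPoint]

lemma le_norm_insertNth {R c : ℝ} (hc : |c| = R) (i : Fin (N + 1)) (x : Fin N → ℝ) :
    R ≤ ‖(WithLp.toLp 2 (Fin.insertNth i c x : Fin (N + 1) → ℝ) : Eu (N + 1))‖ := by
  simpa [hc] using
    abs_coord_le_norm (WithLp.toLp 2 (Fin.insertNth i c x : Fin (N + 1) → ℝ) : Eu (N + 1)) i

variable {F : Fin (N + 1) → Eu (N + 1) → ℝ} {R : ℝ}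

lemma integral_box_fieldDiv_eq_faces {a b : Fin (N + 1) → ℝ} (hab : a ≤ b)
    (hF : ∀ z ∈ Set.Icc a b, ∀ i, ContDiffAt ℝ 1 (F i) (WithLp.toLp 2 z)) :
    ∫ z in Set.Icc a b, fieldDiv F (WithLp.toLp 2 z) = ∑ i : Fin (N + 1),
      ((∫ x in Set.Icc (a ∘ i.succAbove) (b ∘ i.succAbove),
          F i (WithLp.toLp 2 (i.insertNth (b i) x)))
        - ∫ x in Set.Icc (a ∘ i.succAbove) (b ∘ i.succAbove),
          F i (WithLp.toLp 2 (i.insertNth (a i) x))) := by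
  let toEu := (PiLp.continuousLinearEquiv 2 ℝ (fun _ : Fin (N + 1) => ℝ)).symm
  have hcont {f : Eu (N + 1) → ℝ} (hf : ∀ z ∈ Set.Icc a b, ContinuousAt f (WithLp.toLp 2 z)) :
      ContinuousOn (fun z => f (WithLp.toLp 2 z)) (Set.Icc a b) := fun z hz =>
    ((hf z hz).comp (PiLp.continuous_toLp 2 _).continuousAt).continuousWithinAt
  have hdiv : ∀ z ∈ Set.Icc a b, ContinuousAt (fieldDiv F) (WithLp.toLp 2 z) := fun z hz =>
    (ContDiffAt.sum (n := 0) fun j _ => contDiffAt_pderiv j (hF z hz j) (by norm_num)).continuousAt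
  let F' (i : Fin (N + 1)) (z : Fin (N + 1) → ℝ) : (Fin (N + 1) → ℝ) →L[ℝ] ℝ :=
    (fderiv ℝ (F i) (WithLp.toLp 2 z)).comp (toEu : (Fin (N + 1) → ℝ) →L[ℝ] Eu (N + 1))
  have hF' (z) : ∑ i, F' i z (Pi.single i 1) = fieldDiv F (WithLp.toLp 2 z) := rfl
  have hder : ∀ z ∈ Set.Icc a b, ∀ i, HasFDerivAt (fun z => F i (WithLp.toLp 2 z)) (F' i z) z :=
    fun z hz i => HasFDerivAt.comp (g := F i) z
      ((hF z hz i).differentiableAt (by norm_num)).hasFDerivAt toEu.hasFDerivAt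
  simp only [← hF']
  refine integral_divergence_of_hasFDerivAt_off_countable' a b hab
    (fun i z => F i (WithLp.toLp 2 z)) F' ∅ Set.countable_empty
    (fun i => hcont fun z hz => (hF z hz i).continuousAt) (fun z hz => hder z ?_) ?_
  · exact ⟨fun j => (hz.1 j trivial).1.le, fun j => (hz.1 j trivial).2.le⟩
  · simp only [hF']
    exact (hcont hdiv).integrableOn_compact isCompact_Icc

theorem integral_halfSpace_fieldDiv (hF : ∀ y ∈ halfSpace N, ∀ i, ContDiffAt ℝ 1 (F i) y)
    (hR : 0 < R) (h0 : ∀ i y, R ≤ ‖y‖ → F i y = 0) :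
    ∫ y in halfSpace N, fieldDiv F y = -∫ y : Eu N, F 0 (boundaryPoint y) := by
  have hface (i : Fin (N + 1)) (c : ℝ) (hc : |c| = R) (x : Fin N → ℝ) :
      F i (WithLp.toLp 2 (i.insertNth c x)) = 0 := h0 i _ (le_norm_insertNth hc i x)
  have hdiv (y : Eu (N + 1)) (hy : R < ‖y‖) : fieldDiv F y = 0 :=
    Finset.sum_eq_zero fun i _ => pderiv_eq_zero_of_lt_norm (h0 i) i hy
  have hcorner : (Fin.cons 0 fun _ => -R : Fin (N + 1) → ℝ) ≤ fun _ => R :=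
    Pi.le_def.2 (Fin.cases hR.le fun i => by simpa using (neg_lt_self hR).le)
  rw [setIntegral_halfSpace_eq_halfBox hdiv, halfBox, integral_box_fieldDiv_eq_faces hcorner
      fun z hz => hF _ (mem_halfBox_iff.1 hz).1, Fin.sum_univ_succ, Finset.sum_eq_zero, add_zero,
    integral_boundaryPoint]
  · simp only [hface 0 R (abs_of_pos hR), integral_zero, zero_sub, Fin.cons_zero]
    congr 1
    refine setIntegral_eq_integral_of_forall_compl_eq_zero fun x hx => h0 _ _ ?_
    contrapose! hx
    have hbox := mem_halfBox_iff.1 (mem_halfBox_of_norm_le (by simp) hx.le)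
    simp only [Fin.insertNth_zero', Fin.cons_succ] at hbox
    exact ⟨fun i => by simpa using (abs_le.1 (hbox.2.2 i)).1,
      fun i => by simpa using (abs_le.1 (hbox.2.2 i)).2⟩
  · intro i _
    simp [hface i.succ R (abs_of_pos hR), hface i.succ (-R) (by rw [abs_neg, abs_of_pos hR])]

end HalfSpace

section Green

variable {n N : ℕ} {k : ℝ}

/-- The flux whose divergence is the integrand `∑ᵢ gᵢ(Δu + k grad div u)ᵢ` of the weak form of the
Lamé operator, up to terms symmetric in `u` and `g`. -/
def lameFlux (k : ℝ) (u g : Fin n → Eu n → ℝ) (i : Fin n) (y : Eu n) : ℝ :=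
  ∑ j, g j y * pderiv i (u j) y + k * (g i y * fieldDiv u y)

lemma contDiffAt_lameFlux {u g : Fin n → Eu n → ℝ} {y : Eu n} (hu : ∀ i, ContDiffAt ℝ 2 (u i) y)
    (hg : ∀ i, ContDiffAt ℝ 1 (g i) y) (i : Fin n) : ContDiffAt ℝ 1 (lameFlux k u g i) y :=
  (ContDiffAt.sum fun j _ => (hg j).mul (contDiffAt_pderiv i (hu j) (by norm_num))).add
    (contDiffAt_const.mul ((hg i).mul (contDiffAt_fieldDiv hu)))

lemma fieldDiv_lameFlux {u g : Fin n → Eu n → ℝ} {y : Eu n} (hu : ∀ i, ContDiffAt ℝ 2 (u i) y)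
    (hg : ∀ i, DifferentiableAt ℝ (g i) y) :
    fieldDiv (lameFlux k u g) y = ∑ i, g i y * lameOp k u i y
      + (∑ i, ∑ j, pderiv i (g j) y * pderiv i (u j) y + k * (fieldDiv g y * fieldDiv u y)) := by
  have hpu (i j) : DifferentiableAt ℝ (pderiv i (u j)) y :=
    (contDiffAt_pderiv (a := 1) i (hu j) (by norm_num)).differentiableAt (by norm_num)
  have hdu : DifferentiableAt ℝ (fieldDiv u) y :=
    (contDiffAt_fieldDiv hu).differentiableAt (by norm_num)
  have hflux (i : Fin n) : pderiv i (lameFlux k u g i) y =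
      ∑ j, (pderiv i (g j) y * pderiv i (u j) y + g j y * pderiv i (pderiv i (u j)) y)
        + k * (pderiv i (g i) y * fieldDiv u y + g i y * pderiv i (fieldDiv u) y) := by
    unfold lameFlux
    rw [pderiv_add i (by fun_prop) (by fun_prop), pderiv_sum _ _ fun j _ => by fun_prop,
      pderiv_const_mul i k (by fun_prop), pderiv_mul i (hg i) hdu]
    simp only [pderiv_mul i (hg _) (hpu i _)]
  have hswap : ∑ i, ∑ j, g j y * pderiv i (pderiv i (u j)) y = ∑ j, g j y * lapl (u j) y := by
    rw [Finset.sum_comm]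
    simp only [lapl_eq_sum_pderiv, Finset.mul_sum]
  have hdiv : ∑ i, pderiv i (g i) y * fieldDiv u y = fieldDiv g y * fieldDiv u y :=
    (Finset.sum_mul ..).symm
  simp only [fieldDiv.eq_1 (lameFlux k u g), hflux, lameOp, Finset.sum_add_distrib, mul_add,
    hswap, ← Finset.mul_sum, hdiv, mul_left_comm _ k]
  ring

theorem green_lameOp_halfSpace {u g : Fin (N + 1) → Eu (N + 1) → ℝ} {R : ℝ}
    (hu : ∀ y ∈ halfSpace N, ∀ i, ContDiffAt ℝ 2 (u i) y)
    (hg : ∀ i, ContDiff ℝ 2 (g i)) (hR : 0 < R) (h0 : ∀ i y, R ≤ ‖y‖ → g i y = 0)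
    (hb : ∀ i y, g i (boundaryPoint y) = 0) :
    ∫ y in halfSpace N, ∑ i, (g i y * lameOp k u i y - u i y * lameOp k g i y) =
      ∫ y, (∑ i, u i (boundaryPoint y) * pderiv 0 (g i) (boundaryPoint y)
        + k * (u 0 (boundaryPoint y) * fieldDiv g (boundaryPoint y))) := by
  have hg2 (y i) : ContDiffAt ℝ 2 (g i) y := (hg i).contDiffAt
  have hflux (y) (hy : y ∈ halfSpace N) (i) :
      ContDiffAt ℝ 1 (lameFlux k u g i) y ∧ ContDiffAt ℝ 1 (lameFlux k g u i) y :=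
    ⟨contDiffAt_lameFlux (hu y hy) (fun i => (hg2 y i).of_le (by norm_num)) i,
      contDiffAt_lameFlux (hg2 y) (fun i => (hu y hy i).of_le (by norm_num)) i⟩
  have hdiv : ∀ y ∈ halfSpace N, ∑ i, (g i y * lameOp k u i y - u i y * lameOp k g i y) =
      fieldDiv (fun i z => lameFlux k u g i z - lameFlux k g u i z) y := by
    intro y hy
    have hsub : fieldDiv (fun i z => lameFlux k u g i z - lameFlux k g u i z) y =
        fieldDiv (lameFlux k u g) y - fieldDiv (lameFlux k g u) y := by
      simp only [fieldDiv, ← Finset.sum_sub_distrib]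
      exact Finset.sum_congr rfl fun i _ =>
        pderiv_sub i ((hflux y hy i).1.differentiableAt (by norm_num))
          ((hflux y hy i).2.differentiableAt (by norm_num))
    rw [hsub, fieldDiv_lameFlux (hu y hy) fun i => (hg2 y i).differentiableAt (by norm_num),
      fieldDiv_lameFlux (hg2 y) fun i => (hu y hy i).differentiableAt (by norm_num),
      Finset.sum_sub_distrib, mul_comm (fieldDiv u y)]
    simp only [mul_comm (pderiv _ (u _) y)]
    ring
  have hfar (i y) (hy : R + 1 ≤ ‖y‖) : lameFlux k u g i y - lameFlux k g u i y = 0 := by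
    have hpg (i j) : pderiv i (g j) y = 0 := pderiv_eq_zero_of_lt_norm (h0 j) i (by linarith)
    simp [lameFlux, fieldDiv, h0 _ y (by linarith), hpg]
  rw [setIntegral_congr_fun measurableSet_halfSpace hdiv, integral_halfSpace_fieldDiv
    (fun y hy i => (hflux y hy i).1.sub (hflux y hy i).2) (by linarith) hfar, ← integral_neg]
  simp [lameFlux, hb]

end Green

section Reflection

variable {N : ℕ} {k : ℝ} {f : Eu (N + 1) → ℝ} {P : Fin (N + 1) → Eu (N + 1) → ℝ} {y : Eu (N + 1)}

/-- The diagonal entries `(-1, 1, …, 1)` of the reflection in the boundary of the half-space. -/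
def reflectSign (i : Fin (N + 1)) : ℝ := if i = 0 then -1 else 1

/-- The reflection `(y₀, y') ↦ (-y₀, y')` in the boundary of the half-space. -/
def reflect : Eu (N + 1) ≃ₗᵢ[ℝ] Eu (N + 1) :=
  LinearIsometryEquiv.piLpCongrRight 2 fun i => if i = 0 then .neg ℝ else .refl ℝ ℝ

lemma reflectSign_mul_self (i : Fin (N + 1)) : reflectSign i * reflectSign i = 1 := by
  unfold reflectSign
  split_ifs <;> norm_num

lemma reflect_apply (y : Eu (N + 1)) (i : Fin (N + 1)) : reflect y i = reflectSign i * y i := by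
  by_cases hi : i = 0 <;> simp [reflect, reflectSign, hi]

lemma reflect_boundaryPoint (y : Eu N) : reflect (boundaryPoint y) = boundaryPoint y := by
  ext i
  refine Fin.cases ?_ (fun j => ?_) i <;> simp [reflect_apply, reflectSign]

lemma reflect_single (i : Fin (N + 1)) :
    reflect (EuclideanSpace.single i 1) = reflectSign i • EuclideanSpace.single i (1 : ℝ) := by
  ext j
  by_cases hij : j = i <;> simp [reflect_apply, hij]

lemma pderiv_comp_reflect (i : Fin (N + 1)) (f : Eu (N + 1) → ℝ) :
    pderiv i (fun z => f (reflect z)) = fun y => reflectSign i * pderiv i f (reflect y) := by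
  ext y
  have hchain := reflect.toContinuousLinearEquiv.comp_right_fderiv (f := f) (x := y)
  have happly := congrArg (fun L => L (EuclideanSpace.single i (1 : ℝ))) hchain
  simpa [pderiv, Function.comp_def, reflect_single] using happly

lemma lapl_comp_reflect (hf : ContDiff ℝ ∞ f) (y : Eu (N + 1)) :
    lapl (fun z => f (reflect z)) y = lapl f (reflect y) := by
  simp only [lapl_eq_sum_pderiv, pderiv_comp_reflect]
  refine Finset.sum_congr rfl fun i _ => ?_
  rw [pderiv_const_mul i _ (differentiableAt_of_smooth (by fun_prop) y),
    pderiv_comp_reflect i (pderiv i f), ← mul_assoc, reflectSign_mul_self, one_mul]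

lemma fieldDiv_comp_reflect (P : Fin (N + 1) → Eu (N + 1) → ℝ) (y : Eu (N + 1)) :
    fieldDiv (fun i z => P i (reflect z)) y =
      fieldDiv P (reflect y) + 2 * pderiv 0 (fun z => P 0 (reflect z)) y := by
  simp only [fieldDiv, pderiv_comp_reflect, Fin.sum_univ_succ, reflectSign, Fin.succ_ne_zero,
    if_true, if_false, one_mul]
  ring

lemma eventuallyEq_zero_comp_reflect (hf : tsupport f ⊆ {z | 0 < z 0}) (hy : y ∈ halfSpace N) :
    (fun z => f (reflect z)) =ᶠ[𝓝 y] 0 := by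
  have hout : reflect y ∉ tsupport f := fun hmem => by
    have hpos : 0 < reflect y 0 := hf hmem
    have hnonneg : 0 ≤ y 0 := hy
    simp only [reflect_apply, reflectSign, if_true] at hpos
    linarith
  exact reflect.continuous.continuousAt.eventually (notMem_tsupport_iff_eventuallyEq.1 hout)

/-- The method of images: a field vanishing on the boundary of the half-space whose Lamé operator
is that of a multiple of the curl-free field `P` with sources inside the half-space. -/
def testField (k : ℝ) (P : Fin (N + 1) → Eu (N + 1) → ℝ) (i : Fin (N + 1)) (y : Eu (N + 1)) : ℝ :=
  (2 + k) * (P i y - P i (reflect y)) + 2 * k * (y 0 * pderiv i (fun z => P 0 (reflect z)) y)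

@[fun_prop]
lemma contDiff_testField (hP : ∀ i, ContDiff ℝ ∞ (P i)) (i : Fin (N + 1)) :
    ContDiff ℝ ∞ (testField k P i) := by
  unfold testField
  fun_prop

lemma testField_boundaryPoint (i : Fin (N + 1)) (y : Eu N) :
    testField k P i (boundaryPoint y) = 0 := by
  simp [testField, reflect_boundaryPoint]

lemma pderiv_testField (hP : ∀ i, ContDiff ℝ ∞ (P i)) (i j : Fin (N + 1)) (y : Eu (N + 1)) :
    pderiv j (testField k P i) y = (2 + k) * (pderiv j (P i) y
        - pderiv j (fun z => P i (reflect z)) y)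
      + 2 * k * ((if j = 0 then 1 else 0) * pderiv i (fun z => P 0 (reflect z)) y
        + y 0 * pderiv j (pderiv i fun z => P 0 (reflect z)) y) := by
  have hdiff {h : Eu (N + 1) → ℝ} (hh : ContDiff ℝ ∞ h) := differentiableAt_of_smooth hh y
  unfold testField
  rw [pderiv_add j (hdiff (by fun_prop)) (hdiff (by fun_prop)),
    pderiv_const_mul j _ (hdiff (by fun_prop)), pderiv_const_mul j _ (hdiff (by fun_prop)),
    pderiv_sub j (hdiff (hP i)) (hdiff (by fun_prop)),
    pderiv_mul j (hdiff (by fun_prop)) (hdiff (by fun_prop)), pderiv_coord]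

lemma pderiv_zero_testField_boundaryPoint
    (hP : ∀ i, ContDiff ℝ ∞ (P i)) (hcurl : ∀ i j, pderiv i (P j) = pderiv j (P i))
    (i : Fin (N + 1)) (y : Eu N) :
    pderiv 0 (testField k P i) (boundaryPoint y) =
      (4 + 2 * k + 2 * k * reflectSign i) * pderiv 0 (P i) (boundaryPoint y) := by
  simp only [pderiv_testField hP, pderiv_comp_reflect, reflect_boundaryPoint, hcurl i 0,
    boundaryPoint_zero, if_true, reflectSign]
  ring

lemma lapl_comp_reflect_eventuallyEq_zero
    (hP : ∀ i, ContDiff ℝ ∞ (P i)) (hcurl : ∀ i j, pderiv i (P j) = pderiv j (P i))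
    (hsupp : tsupport (fieldDiv P) ⊆ {z | 0 < z 0}) (hy : y ∈ halfSpace N) (i : Fin (N + 1)) :
    lapl (fun z => P i (reflect z)) =ᶠ[𝓝 y] 0 := by
  have hsupp' : tsupport (pderiv i (fieldDiv P)) ⊆ {z | 0 < z 0} := fun z hz => hsupp (by
    contrapose! hz
    rw [notMem_tsupport_iff_eventuallyEq] at hz ⊢
    exact pderiv_eventuallyEq_zero i hz)
  have hlapl : lapl (fun z => P i (reflect z)) = fun z => pderiv i (fieldDiv P) (reflect z) :=
    funext fun z => by rw [lapl_comp_reflect (hP i), lapl_eq_pderiv_fieldDiv hP hcurl]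
  rw [hlapl]
  exact eventuallyEq_zero_comp_reflect hsupp' hy

lemma fieldDiv_testField_eventuallyEq
    (hP : ∀ i, ContDiff ℝ ∞ (P i)) (hcurl : ∀ i j, pderiv i (P j) = pderiv j (P i))
    (hsupp : tsupport (fieldDiv P) ⊆ {z | 0 < z 0}) (hy : y ∈ halfSpace N) :
    fieldDiv (testField k P) =ᶠ[𝓝 y] fun z =>
      (2 + k) * fieldDiv P z - 4 * pderiv 0 (fun z => P 0 (reflect z)) z := by
  filter_upwards [eventuallyEq_zero_comp_reflect hsupp hy,
    lapl_comp_reflect_eventuallyEq_zero hP hcurl hsupp hy 0] with z hdiv hlapl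
  have hrefl := fieldDiv_comp_reflect P z
  simp only [hdiv, Pi.zero_apply, zero_add] at hrefl
  rw [Pi.zero_apply, lapl_eq_sum_pderiv] at hlapl
  have hsum : fieldDiv (testField k P) z = (2 + k) * (fieldDiv P z
        - fieldDiv (fun i z => P i (reflect z)) z)
      + 2 * k * (pderiv 0 (fun z => P 0 (reflect z)) z
        + z 0 * ∑ i, pderiv i (pderiv i fun z => P 0 (reflect z)) z) := by
    simp only [fieldDiv, pderiv_testField hP, Finset.sum_add_distrib, ← Finset.mul_sum,
      Finset.sum_sub_distrib, ite_mul, one_mul, zero_mul, Finset.sum_ite_eq', Finset.mem_univ,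
      if_true]
  rw [hsum, hrefl, hlapl]
  ring

lemma fieldDiv_testField_boundaryPoint
    (hP : ∀ i, ContDiff ℝ ∞ (P i)) (hcurl : ∀ i j, pderiv i (P j) = pderiv j (P i))
    (hsupp : tsupport (fieldDiv P) ⊆ {z | 0 < z 0}) (y : Eu N) :
    fieldDiv (testField k P) (boundaryPoint y) = 4 * pderiv 0 (P 0) (boundaryPoint y) := by
  have hdiv : fieldDiv P (boundaryPoint y) = 0 := image_eq_zero_of_notMem_tsupport
    fun hmem => (hsupp hmem).ne' (boundaryPoint_zero y)
  rw [(fieldDiv_testField_eventuallyEq hP hcurl hsupp (boundaryPoint_mem_halfSpace y)).eq_of_nhds,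
    hdiv, pderiv_comp_reflect]
  simp [reflectSign, reflect_boundaryPoint]

lemma lapl_testField
    (hP : ∀ i, ContDiff ℝ ∞ (P i)) (hcurl : ∀ i j, pderiv i (P j) = pderiv j (P i))
    (hsupp : tsupport (fieldDiv P) ⊆ {z | 0 < z 0}) (hy : y ∈ halfSpace N) (i : Fin (N + 1)) :
    lapl (testField k P i) y = (2 + k) * pderiv i (fieldDiv P) y
      + 4 * k * pderiv 0 (pderiv i fun z => P 0 (reflect z)) y := by
  have hlapl (i) := lapl_comp_reflect_eventuallyEq_zero hP hcurl hsupp hy i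
  have hlapl' : lapl (pderiv i fun z => P 0 (reflect z)) y = 0 := by
    rw [lapl_pderiv i (by fun_prop)]
    exact (pderiv_eventuallyEq_zero i (hlapl 0)).eq_of_nhds
  have hsub : lapl (fun z => P i z - P i (reflect z)) y = pderiv i (fieldDiv P) y := by
    rw [lapl_sub (hP i) (by fun_prop), (hlapl i).eq_of_nhds, lapl_eq_pderiv_fieldDiv hP hcurl,
      Pi.zero_apply, sub_zero]
  unfold testField
  rw [lapl_add (by fun_prop) (by fun_prop), lapl_const_mul _ (by fun_prop),
    lapl_const_mul _ (by fun_prop), lapl_coord_mul 0 (by fun_prop), hsub, hlapl']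
  ring

theorem lameOp_testField
    (hP : ∀ i, ContDiff ℝ ∞ (P i)) (hcurl : ∀ i j, pderiv i (P j) = pderiv j (P i))
    (hsupp : tsupport (fieldDiv P) ⊆ {z | 0 < z 0}) (hy : y ∈ halfSpace N) (i : Fin (N + 1)) :
    lameOp k (testField k P) i y = (1 + k) * (2 + k) * pderiv i (fieldDiv P) y := by
  have hdiff {h : Eu (N + 1) → ℝ} (hh : ContDiff ℝ ∞ h) := differentiableAt_of_smooth hh y
  rw [lameOp, lapl_testField hP hcurl hsupp hy,
    (pderiv_congr i (fieldDiv_testField_eventuallyEq hP hcurl hsupp hy)).eq_of_nhds,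
    pderiv_sub i (hdiff (by fun_prop)) (hdiff (by fun_prop)),
    pderiv_const_mul i _ (hdiff (by fun_prop)), pderiv_const_mul i _ (hdiff (by fun_prop)),
    pderiv_pderiv_comm i 0 (by fun_prop)]
  ring

end Reflection

section Decay

variable {n N : ℕ} {k : ℝ}

/-- The comparison function `(1 + ‖y‖)⁻ᵐ`; decay of order `m` is expressed as
`f =O[⊤] decayRate m`, a bound on the whole space. -/
def decayRate (m : ℕ) (y : Eu n) : ℝ := ((1 + ‖y‖) ^ m)⁻¹

lemma decayRate_pos (m : ℕ) (y : Eu n) : 0 < decayRate m y := by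
  unfold decayRate
  positivity

lemma decayRate_mul (a b : ℕ) (y : Eu n) :
    decayRate a y * decayRate b y = decayRate (a + b) y := by
  simp only [decayRate, pow_add, mul_inv]

lemma integrable_decayRate {m : ℕ} (hm : n < m) : Integrable (decayRate m : Eu n → ℝ) := by
  have hint := integrable_one_add_norm (E := Eu n) (μ := volume) (r := m) (by simpa using hm)
  refine hint.congr (Eventually.of_forall fun y => ?_)
  simp only [decayRate, rpow_neg (by positivity : 0 ≤ 1 + ‖y‖), rpow_natCast]

lemma isBigO_decayRate_of_hasCompactSupport {f : Eu n → ℝ} (hf : Continuous f)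
    (hsupp : HasCompactSupport f) (m : ℕ) : f =O[⊤] decayRate m := by
  have hcont : Continuous fun y => f y * (1 + ‖y‖) ^ m := by fun_prop
  obtain ⟨C, hC⟩ := hcont.bounded_above_of_compact_support hsupp.mul_right
  refine Asymptotics.isBigO_top.2 ⟨C, fun y => ?_⟩
  have hpos : 0 < (1 + ‖y‖) ^ m := by positivity
  have hCy := hC y
  rw [norm_mul, norm_of_nonneg hpos.le] at hCy
  rw [norm_of_nonneg (decayRate_pos m y).le, decayRate, ← div_eq_mul_inv, le_div_iff₀ hpos]
  exact hCy

lemma isBigO_decayRate_comp_sub {f : Eu n → ℝ} {m : ℕ} (hf : f =O[⊤] decayRate m) (a : Eu n) :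
    (fun y => f (y - a)) =O[⊤] decayRate m := by
  refine (hf.comp_tendsto tendsto_top).trans
    (Asymptotics.isBigO_top.2 ⟨(1 + ‖a‖) ^ m, fun y => ?_⟩)
  have hle : 1 + ‖y‖ ≤ (1 + ‖a‖) * (1 + ‖y - a‖) := by
    have hnorm := norm_le_norm_sub_add y a
    nlinarith [mul_nonneg (norm_nonneg a) (norm_nonneg (y - a))]
  rw [Function.comp_apply, norm_of_nonneg (decayRate_pos ..).le,
    norm_of_nonneg (decayRate_pos ..).le, decayRate, decayRate, ← div_eq_mul_inv, inv_eq_one_div,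
    div_le_div_iff₀ (by positivity) (by positivity), one_mul, ← mul_pow]
  exact pow_le_pow_left₀ (by positivity) hle m

lemma isBigO_decayRate_comp_reflect {f : Eu (N + 1) → ℝ} {m : ℕ} (hf : f =O[⊤] decayRate m) :
    (fun y => f (reflect y)) =O[⊤] decayRate m := by
  have hcomp := hf.comp_tendsto (k := reflect) (l' := ⊤) tendsto_top
  have hrate : decayRate m ∘ reflect = (decayRate m : Eu (N + 1) → ℝ) := by
    ext y
    simp [decayRate]
  rwa [hrate] at hcomp

lemma isBigO_decayRate_coord_mul {f : Eu n → ℝ} {m : ℕ} (hf : f =O[⊤] decayRate (m + 1))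
    (i : Fin n) : (fun y => y i * f y) =O[⊤] decayRate m := by
  have hcoord : (fun y : Eu n => y i) =O[⊤] fun y => 1 + ‖y‖ :=
    Asymptotics.isBigO_of_le _ fun y => by
      rw [norm_of_nonneg (by positivity : 0 ≤ 1 + ‖y‖)]
      exact (PiLp.norm_apply_le y i).trans (by linarith [norm_nonneg y])
  refine (hcoord.mul hf).trans (Asymptotics.isBigO_of_le _ fun y => le_of_eq ?_)
  have hpos : (1 + ‖y‖) ≠ 0 := by positivity
  simp only [decayRate, pow_succ]
  field_simp

/-- A curl-free field whose sources (the support of its divergence) form a compact subset of the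
open half-space, decaying at infinity like the field of a point charge. -/
structure IsSourceField (P : Fin (N + 1) → Eu (N + 1) → ℝ) : Prop where
  contDiff : ∀ i, ContDiff ℝ ∞ (P i)
  curl_free : ∀ i j, pderiv i (P j) = pderiv j (P i)
  hasCompactSupport : HasCompactSupport (fieldDiv P)
  tsupport_subset : tsupport (fieldDiv P) ⊆ {y | 0 < y 0}
  decay : ∀ i, P i =O[⊤] decayRate N
  decay_pderiv : ∀ i j, pderiv i (P j) =O[⊤] decayRate (N + 1)
  decay_pderiv_pderiv : ∀ i j l, pderiv i (pderiv j (P l)) =O[⊤] decayRate (N + 2)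

variable {P : Fin (N + 1) → Eu (N + 1) → ℝ}

lemma isBigO_pderiv_comp_reflect {f : Eu (N + 1) → ℝ} {m : ℕ} {i : Fin (N + 1)}
    (hf : pderiv i f =O[⊤] decayRate m) :
    pderiv i (fun z => f (reflect z)) =O[⊤] decayRate m := by
  rw [pderiv_comp_reflect]
  exact (isBigO_decayRate_comp_reflect hf).const_mul_left _

lemma IsSourceField.testField_decay (hP : IsSourceField P) (i : Fin (N + 1)) :
    testField k P i =O[⊤] decayRate N :=
  (((hP.decay i).sub (isBigO_decayRate_comp_reflect (hP.decay i))).const_mul_left _).add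
    ((isBigO_decayRate_coord_mul
      (isBigO_pderiv_comp_reflect (hP.decay_pderiv i 0)) 0).const_mul_left _)

lemma IsSourceField.pderiv_testField_decay (hP : IsSourceField P) (i j : Fin (N + 1)) :
    pderiv j (testField k P i) =O[⊤] decayRate (N + 1) := by
  have hsnd : pderiv j (pderiv i fun z => P 0 (reflect z)) =O[⊤] decayRate (N + 2) := by
    have hsmooth := hP.contDiff 0
    have hmul : pderiv j (pderiv i fun z => P 0 (reflect z)) = fun y =>
        reflectSign i * pderiv j (fun z => pderiv i (P 0) (reflect z)) y := by
      rw [pderiv_comp_reflect i]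
      exact funext fun y => pderiv_const_mul j _ (differentiableAt_of_smooth (by fun_prop) y)
    rw [hmul]
    exact (isBigO_pderiv_comp_reflect (hP.decay_pderiv_pderiv j i 0)).const_mul_left _
  rw [funext (pderiv_testField hP.contDiff i j)]
  exact (((hP.decay_pderiv j i).sub
    (isBigO_pderiv_comp_reflect (hP.decay_pderiv j i))).const_mul_left _).add
      ((((isBigO_pderiv_comp_reflect (hP.decay_pderiv i 0)).const_mul_left _).add
        (isBigO_decayRate_coord_mul hsnd 0)).const_mul_left _)

end Decay

section Cutoff

variable {n N : ℕ} {k R : ℝ}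

/-- A smooth function equal to `1` on the unit ball and to `0` outside the ball of radius `2`. -/
def unitBump : ContDiffBump (0 : Eu n) := ⟨1, 2, one_pos, one_lt_two⟩

/-- The smooth cutoff at scale `R`: equal to `1` on the ball of radius `R` and to `0` outside the
ball of radius `2R`. -/
def cutoff (R : ℝ) (y : Eu n) : ℝ := unitBump (R⁻¹ • y)

@[fun_prop]
lemma contDiff_cutoff : ContDiff ℝ ∞ (cutoff R : Eu n → ℝ) :=
  unitBump.contDiff.comp (contDiff_const_smul R⁻¹)

lemma norm_cutoff_le_one (R : ℝ) (y : Eu n) : ‖cutoff R y‖ ≤ 1 := by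
  rw [cutoff, norm_of_nonneg unitBump.nonneg]
  exact unitBump.le_one

lemma cutoff_eq_zero (hR : 0 < R) {y : Eu n} (hy : 2 * R ≤ ‖y‖) : cutoff R y = 0 := by
  refine unitBump.zero_of_le_dist ?_
  rw [dist_zero_right, norm_smul, norm_of_nonneg (by positivity), inv_mul_eq_div]
  exact (le_div_iff₀ hR).2 hy

lemma cutoff_eventuallyEq_one {y : Eu n} (hy : ‖y‖ < R) : cutoff R =ᶠ[𝓝 y] 1 := by
  have hR : 0 < R := (norm_nonneg y).trans_lt hy
  filter_upwards [continuous_norm.continuousAt.eventually (gt_mem_nhds hy)] with z hz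
  refine unitBump.one_of_mem_closedBall ?_
  rw [mem_closedBall_zero_iff, norm_smul, norm_of_nonneg (by positivity), inv_mul_eq_div]
  exact (div_le_one hR).2 hz.le

lemma pderiv_cutoff (i : Fin n) (R : ℝ) :
    pderiv i (cutoff R) = fun y : Eu n => R⁻¹ * pderiv i unitBump (R⁻¹ • y) :=
  pderiv_comp_smul i unitBump R⁻¹

lemma pderiv_pderiv_cutoff (i j : Fin n) (R : ℝ) : pderiv i (pderiv j (cutoff R)) =
    fun y : Eu n => R⁻¹ ^ 2 * pderiv i (pderiv j unitBump) (R⁻¹ • y) := by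
  have hsmooth : ContDiff ℝ ∞ (unitBump : Eu n → ℝ) := unitBump.contDiff
  ext y
  rw [pderiv_cutoff, pderiv_const_mul i _ (differentiableAt_of_smooth (by fun_prop) y),
    pderiv_comp_smul i (pderiv j unitBump)]
  ring

lemma isBigO_rescale {f : Eu n → ℝ} {m : ℕ} (hf : f =O[⊤] decayRate m) :
    (fun p : ℝ × Eu n => p.1⁻¹ ^ m * f (p.1⁻¹ • p.2)) =O[𝓟 {p | 1 ≤ p.1}]
      fun p => decayRate m p.2 := by
  obtain ⟨C, hC⟩ := Asymptotics.isBigO_top.1 hf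
  refine Asymptotics.isBigO_principal.2 ⟨C, ?_⟩
  rintro ⟨R, y⟩ (hR : 1 ≤ R)
  have hC0 : 0 ≤ C := nonneg_of_mul_nonneg_left ((norm_nonneg _).trans (hC 0))
    (norm_pos_iff.2 (decayRate_pos m 0).ne')
  have hR0 : 0 < R := one_pos.trans_le hR
  have hscale : R⁻¹ ^ m * decayRate m (R⁻¹ • y) = ((R + ‖y‖) ^ m)⁻¹ := by
    rw [decayRate, inv_pow, ← mul_inv, ← mul_pow, norm_smul, norm_of_nonneg (inv_nonneg.2 hR0.le)]
    field_simp
  have hle : ((R + ‖y‖) ^ m)⁻¹ ≤ decayRate m y :=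
    inv_anti₀ (by positivity) (pow_le_pow_left₀ (by positivity) (by linarith) m)
  calc ‖R⁻¹ ^ m * f (R⁻¹ • y)‖
      = R⁻¹ ^ m * ‖f (R⁻¹ • y)‖ := by rw [norm_mul, norm_of_nonneg (by positivity)]
    _ ≤ R⁻¹ ^ m * (C * ‖decayRate m (R⁻¹ • y)‖) := by gcongr; exact hC _
    _ = C * ((R + ‖y‖) ^ m)⁻¹ := by
      rw [norm_of_nonneg (decayRate_pos ..).le, mul_left_comm, hscale]
    _ ≤ C * ‖decayRate m y‖ := by
      rw [norm_of_nonneg (decayRate_pos ..).le]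
      gcongr

lemma isBigO_pderiv_cutoff (i : Fin n) :
    (fun p : ℝ × Eu n => pderiv i (cutoff p.1) p.2) =O[𝓟 {p | 1 ≤ p.1}]
      fun p => decayRate 1 p.2 := by
  have hbump : pderiv i (unitBump : Eu n → ℝ) =O[⊤] decayRate 1 :=
    isBigO_decayRate_of_hasCompactSupport (contDiff_pderiv i unitBump.contDiff).continuous
      (hasCompactSupport_pderiv i unitBump.hasCompactSupport) 1
  simpa only [pderiv_cutoff, pow_one] using isBigO_rescale hbump

lemma isBigO_pderiv_pderiv_cutoff (i j : Fin n) :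
    (fun p : ℝ × Eu n => pderiv i (pderiv j (cutoff p.1)) p.2) =O[𝓟 {p | 1 ≤ p.1}]
      fun p => decayRate 2 p.2 := by
  have hbump : pderiv i (pderiv j (unitBump : Eu n → ℝ)) =O[⊤] decayRate 2 :=
    isBigO_decayRate_of_hasCompactSupport
      (contDiff_pderiv i (contDiff_pderiv j unitBump.contDiff)).continuous
      (hasCompactSupport_pderiv i (hasCompactSupport_pderiv j unitBump.hasCompactSupport)) 2
  simpa only [pderiv_pderiv_cutoff] using isBigO_rescale hbump

lemma isBigO_leibnizRemainder_cutoff {w : Eu n → ℝ} {m : ℕ} (hw : w =O[⊤] decayRate m)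
    (hw' : ∀ i, pderiv i w =O[⊤] decayRate (m + 1)) (i j : Fin n) :
    (fun p : ℝ × Eu n => leibnizRemainder (cutoff p.1) w i j p.2) =O[𝓟 {p | 1 ≤ p.1}]
      fun p => decayRate (m + 2) p.2 := by
  have hsnd {f : Eu n → ℝ} {l : ℕ} (hf : f =O[⊤] decayRate l) :
      (fun p : ℝ × Eu n => f p.2) =O[𝓟 {p | 1 ≤ p.1}] fun p => decayRate l p.2 :=
    hf.comp_tendsto tendsto_top
  have hfst (i j : Fin n) := (isBigO_pderiv_cutoff i).mul (hsnd (hw' j))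
  have hzero := (isBigO_pderiv_pderiv_cutoff i j).mul (hsnd hw)
  simp only [decayRate_mul, show 1 + (m + 1) = m + 2 by ring, Nat.add_comm 2 m] at hfst hzero
  exact ((hfst i j).add (hfst j i)).add hzero

variable {P : Fin (N + 1) → Eu (N + 1) → ℝ}

lemma IsSourceField.lameOp_cutoff_testField_bound (hP : IsSourceField P) (i : Fin (N + 1)) :
    ∃ C, ∀ R, 1 ≤ R → ∀ y ∈ halfSpace N,
      |lameOp k (fun i z => cutoff R z * testField k P i z) i y| ≤ C * decayRate (N + 2) y := by
  have hrem (i j l) := isBigO_leibnizRemainder_cutoff (hP.testField_decay (k := k) l)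
    (fun j => hP.pderiv_testField_decay l j) i j
  have hsum : (fun p : ℝ × Eu (N + 1) =>
      ∑ j, (leibnizRemainder (cutoff p.1) (testField k P i) j j p.2
        + k * leibnizRemainder (cutoff p.1) (testField k P j) i j p.2))
      =O[𝓟 {p | 1 ≤ p.1}] fun p => decayRate (N + 2) p.2 :=
    .fun_sum fun j _ => (hrem j j i).add ((hrem i j j).const_mul_left k)
  have hsource : pderiv i (fieldDiv P) =O[⊤] decayRate (N + 2) :=
    isBigO_decayRate_of_hasCompactSupport
      (contDiff_pderiv i (contDiff_fieldDiv hP.contDiff)).continuous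
      (hasCompactSupport_pderiv i hP.hasCompactSupport) _
  obtain ⟨C₁, hC₁⟩ := Asymptotics.isBigO_principal.1 hsum
  obtain ⟨C₂, hC₂⟩ := Asymptotics.isBigO_top.1 (hsource.const_mul_left ((1 + k) * (2 + k)))
  refine ⟨C₂ + C₁, fun R hR y hy => ?_⟩
  rw [lameOp_mul k contDiff_cutoff fun i => contDiff_testField hP.contDiff i,
    lameOp_testField hP.contDiff hP.curl_free hP.tsupport_subset hy, add_mul C₂]
  refine (abs_add_le _ _).trans (add_le_add ?_ ?_)
  · rw [abs_mul, ← norm_of_nonneg (decayRate_pos (N + 2) y).le]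
    exact (mul_le_of_le_one_left (abs_nonneg _) (norm_cutoff_le_one R y)).trans (hC₂ y)
  · rw [← norm_of_nonneg (decayRate_pos (N + 2) y).le]
    exact hC₁ (R, y) hR

end Cutoff

section RepresentationFormula

variable {n N : ℕ} {k M R : ℝ} {u P : Fin (N + 1) → Eu (N + 1) → ℝ}

lemma continuous_lameOp {g : Fin n → Eu n → ℝ} (hg : ∀ i, ContDiff ℝ ∞ (g i)) (i : Fin n) :
    Continuous (lameOp k g i) := by
  have hsmooth : ContDiff ℝ ∞ (fun y => ∑ j, pderiv j (pderiv j (g i)) y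
      + k * pderiv i (fieldDiv g) y) := by fun_prop
  exact hsmooth.continuous

lemma integrable_boundary_decay {f : Eu (N + 1) → ℝ} (hf : Continuous f)
    (hdecay : f =O[⊤] decayRate (N + 1)) : Integrable fun y => f (boundaryPoint y) := by
  obtain ⟨C, hC⟩ := Asymptotics.isBigO_top.1 hdecay
  refine ((integrable_decayRate (n := N) N.lt_succ_self).const_mul C).mono'
    (by fun_prop : Continuous _).aestronglyMeasurable (Eventually.of_forall fun y => ?_)
  have hCy := hC (boundaryPoint y)
  rwa [norm_of_nonneg (decayRate_pos ..).le, decayRate, norm_boundaryPoint] at hCy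

lemma integrableOn_halfSpace_mul_of_hasCompactSupport {f g : Eu (N + 1) → ℝ}
    (hf : ContinuousOn f (halfSpace N)) (hg : Continuous g) (hsupp : HasCompactSupport g) :
    IntegrableOn (fun y => f y * g y) (halfSpace N) := by
  have hcompact : IsCompact (tsupport g ∩ halfSpace N) :=
    hsupp.isCompact.inter_right isClosed_halfSpace
  have hint : IntegrableOn (fun y => f y * g y) (tsupport g ∩ halfSpace N) :=
    ((hf.mono Set.inter_subset_right).mul hg.continuousOn).integrableOn_compact hcompact
  refine hint.of_forall_sdiff_eq_zero measurableSet_halfSpace fun y hy => ?_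
  rw [image_eq_zero_of_notMem_tsupport fun hmem => hy.2 ⟨hmem, hy.1⟩, mul_zero]

lemma IsSourceField.integral_fieldDiv_mul_fieldDiv (hP : IsSourceField P)
    (hu : ∀ y ∈ halfSpace N, ∀ i, ContDiffAt ℝ 1 (u i) y) :
    ∫ y in halfSpace N, fieldDiv u y * fieldDiv P y =
      -∫ y in halfSpace N, ∑ i, u i y * pderiv i (fieldDiv P) y := by
  have hsmooth : ContDiff ℝ ∞ (fieldDiv P) := contDiff_fieldDiv hP.contDiff
  have hprod : ∀ y ∈ halfSpace N, fieldDiv (fun i z => u i z * fieldDiv P z) y =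
      fieldDiv u y * fieldDiv P y + ∑ i, u i y * pderiv i (fieldDiv P) y := fun y hy => by
    simp only [fieldDiv.eq_1 u, fieldDiv.eq_1 fun i z => u i z * fieldDiv P z, Finset.sum_mul,
      ← Finset.sum_add_distrib]
    exact Finset.sum_congr rfl fun i _ => pderiv_mul i ((hu y hy i).differentiableAt (by norm_num))
      (differentiableAt_of_smooth hsmooth y)
  obtain ⟨r, hr⟩ := hP.hasCompactSupport.isCompact.isBounded.subset_ball 0
  have hfar (y) (hy : max r 1 ≤ ‖y‖) : fieldDiv P y = 0 :=
    image_eq_zero_of_notMem_tsupport fun hmem =>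
      (mem_ball_zero_iff.1 (hr hmem)).not_ge ((le_max_left r 1).trans hy)
  have hboundary (y : Eu N) : fieldDiv P (boundaryPoint y) = 0 :=
    image_eq_zero_of_notMem_tsupport fun hmem =>
      (hP.tsupport_subset hmem).ne' (boundaryPoint_zero y)
  have hdivthm := integral_halfSpace_fieldDiv (F := fun i z => u i z * fieldDiv P z)
    (fun y hy i => (hu y hy i).mul (hsmooth.contDiffAt.of_le ENat.LEInfty.out))
    (lt_max_of_lt_right one_pos) fun i y hy => by rw [hfar y hy, mul_zero]
  rw [setIntegral_congr_fun measurableSet_halfSpace hprod, integral_add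
    (integrableOn_halfSpace_mul_of_hasCompactSupport ?_ hsmooth.continuous hP.hasCompactSupport)
    (integrable_finsetSum _ fun i _ => integrableOn_halfSpace_mul_of_hasCompactSupport ?_
      (contDiff_pderiv i hsmooth).continuous
      (hasCompactSupport_pderiv i hP.hasCompactSupport))] at hdivthm
  · simp only [hboundary, mul_zero, integral_zero, neg_zero] at hdivthm
    linarith
  · exact fun y hy => (ContDiffAt.sum (n := 0) fun j _ =>
      contDiffAt_pderiv j (hu y hy j) (by norm_num)).continuousAt.continuousWithinAt
  · exact fun y hy => (hu y hy i).continuousAt.continuousWithinAt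

lemma IsSourceField.boundary_integrand (hP : IsSourceField P) (R : ℝ) (y : Eu N) :
    ∑ i, u i (boundaryPoint y)
        * pderiv 0 (fun z => cutoff R z * testField k P i z) (boundaryPoint y)
      + k * (u 0 (boundaryPoint y)
        * fieldDiv (fun i z => cutoff R z * testField k P i z) (boundaryPoint y)) =
    4 * (1 + k) * (cutoff R (boundaryPoint y)
      * ∑ i, u i (boundaryPoint y) * pderiv 0 (P i) (boundaryPoint y)) := by
  have hW (i) := contDiff_testField (k := k) hP.contDiff i
  have hmul (i j) : pderiv j (fun z => cutoff R z * testField k P i z) (boundaryPoint y) =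
      cutoff R (boundaryPoint y) * pderiv j (testField k P i) (boundaryPoint y) := by
    rw [pderiv_mul j (differentiableAt_of_smooth contDiff_cutoff _)
      (differentiableAt_of_smooth (hW i) _), testField_boundaryPoint, mul_zero, zero_add]
  have hdiv : fieldDiv (fun i z => cutoff R z * testField k P i z) (boundaryPoint y) =
      cutoff R (boundaryPoint y) * (4 * pderiv 0 (P 0) (boundaryPoint y)) := by
    rw [← fieldDiv_testField_boundaryPoint hP.contDiff hP.curl_free hP.tsupport_subset,
      fieldDiv, fieldDiv, Finset.mul_sum]
    exact Finset.sum_congr rfl fun i _ => hmul i i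
  have hterm (i) : u i (boundaryPoint y)
        * pderiv 0 (fun z => cutoff R z * testField k P i z) (boundaryPoint y) =
      4 * (1 + k) * (cutoff R (boundaryPoint y)
        * (u i (boundaryPoint y) * pderiv 0 (P i) (boundaryPoint y)))
      - if i = 0 then 4 * k * (cutoff R (boundaryPoint y)
        * (u i (boundaryPoint y) * pderiv 0 (P i) (boundaryPoint y))) else 0 := by
    rw [hmul, pderiv_zero_testField_boundaryPoint hP.contDiff hP.curl_free, reflectSign]
    split_ifs <;> ring
  simp only [hterm, hdiv, Finset.sum_sub_distrib, Finset.sum_ite_eq', Finset.mem_univ, if_true,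
    Finset.mul_sum]
  ring

lemma IsSourceField.green_cutoff (hP : IsSourceField P)
    (hu : ∀ y ∈ halfSpace N, ∀ i, ContDiffAt ℝ 2 (u i) y)
    (hlame : ∀ y ∈ halfSpace N, ∀ i, lameOp k u i y = 0) (hR : 0 < R) :
    -∫ y in halfSpace N, ∑ i, u i y * lameOp k (fun i z => cutoff R z * testField k P i z) i y =
      4 * (1 + k) * ∫ y, cutoff R (boundaryPoint y)
        * ∑ i, u i (boundaryPoint y) * pderiv 0 (P i) (boundaryPoint y) := by
  have hgreen := green_lameOp_halfSpace (k := k) hu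
    (g := fun i z => cutoff R z * testField k P i z) (R := 2 * R)
    (fun i => (contDiff_cutoff.mul (contDiff_testField hP.contDiff i)).of_le ENat.LEInfty.out)
    (by linarith) (fun i y hy => by rw [cutoff_eq_zero hR hy, zero_mul])
    (fun i y => by rw [testField_boundaryPoint, mul_zero])
  simp only [hP.boundary_integrand, integral_const_mul] at hgreen
  rw [← hgreen, ← integral_neg]
  refine setIntegral_congr_fun measurableSet_halfSpace fun y hy => ?_
  simp [hlame y hy]

lemma IsSourceField.tendsto_integral_lameOp_cutoff
    (hP : IsSourceField P) (hu : ∀ y ∈ halfSpace N, ∀ i, ContDiffAt ℝ 2 (u i) y)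
    (hM : ∀ y ∈ halfSpace N, ∀ i, |u i y| ≤ M) :
    Tendsto (fun R => ∫ y in halfSpace N,
        ∑ i, u i y * lameOp k (fun i z => cutoff R z * testField k P i z) i y) atTop
      (𝓝 (∫ y in halfSpace N, ∑ i, u i y * ((1 + k) * (2 + k) * pderiv i (fieldDiv P) y))) := by
  choose C hC using fun i => hP.lameOp_cutoff_testField_bound (k := k) i
  have hmeas (i) : AEStronglyMeasurable (u i) (volume.restrict (halfSpace N)) :=
    ContinuousOn.aestronglyMeasurable
      (fun y hy => (hu y hy i).continuousAt.continuousWithinAt) measurableSet_halfSpace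
  have hsmooth (R i) : ContDiff ℝ ∞ fun z => cutoff R z * testField k P i z :=
    contDiff_cutoff.mul (contDiff_testField hP.contDiff i)
  refine tendsto_integral_filter_of_dominated_convergence
    (fun y => ∑ i, M * (C i * decayRate (N + 2) y)) ?_ ?_ ?_ ?_
  · refine Eventually.of_forall fun R => Finset.aestronglyMeasurable_fun_sum _ fun i _ => ?_
    exact (hmeas i).mul (continuous_lameOp (hsmooth R) i).aestronglyMeasurable
  · filter_upwards [eventually_ge_atTop 1] with R hR
    filter_upwards [ae_restrict_mem measurableSet_halfSpace] with y hy
    refine norm_sum_le_of_le _ fun i _ => ?_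
    rw [norm_mul]
    exact mul_le_mul (hM y hy i) (hC i R hR y hy) (abs_nonneg _)
      ((abs_nonneg _).trans (hM y hy i))
  · exact integrable_finsetSum _ fun i _ =>
      ((integrable_decayRate (by lia)).integrableOn.const_mul _).const_mul _
  · filter_upwards [ae_restrict_mem measurableSet_halfSpace] with y hy
    refine tendsto_const_nhds.congr' ?_
    filter_upwards [eventually_gt_atTop ‖y‖] with R hR
    have hone (j) : (fun z => cutoff R z * testField k P j z) =ᶠ[𝓝 y] testField k P j := by
      filter_upwards [cutoff_eventuallyEq_one hR] with z hz
      rw [hz, Pi.one_apply, one_mul]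
    simp only [lameOp_congr k hone,
      lameOp_testField hP.contDiff hP.curl_free hP.tsupport_subset hy]

lemma IsSourceField.tendsto_integral_boundary_cutoff
    (hP : IsSourceField P) (hu : ∀ y ∈ halfSpace N, ∀ i, ContDiffAt ℝ 2 (u i) y)
    (hM : ∀ y ∈ halfSpace N, ∀ i, |u i y| ≤ M) :
    Tendsto (fun R => ∫ y, cutoff R (boundaryPoint y)
        * ∑ i, u i (boundaryPoint y) * pderiv 0 (P i) (boundaryPoint y)) atTop
      (𝓝 (∫ y, ∑ i, u i (boundaryPoint y) * pderiv 0 (P i) (boundaryPoint y))) := by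
  have hcont (i) : Continuous fun y => u i (boundaryPoint y) :=
    continuous_iff_continuousAt.2 fun y =>
      (hu _ (boundaryPoint_mem_halfSpace y) i).continuousAt.comp
        continuous_boundaryPoint.continuousAt
  have hkernel (i) : Continuous (pderiv 0 (P i)) := (contDiff_pderiv 0 (hP.contDiff i)).continuous
  have hcutoff (R) : Continuous (cutoff R : Eu (N + 1) → ℝ) := contDiff_cutoff.continuous
  refine tendsto_integral_filter_of_dominated_convergence
    (fun y => ∑ i, M * ‖pderiv 0 (P i) (boundaryPoint y)‖) ?_ ?_ ?_ ?_
  · refine Eventually.of_forall fun R => Continuous.aestronglyMeasurable ?_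
    exact ((hcutoff R).comp continuous_boundaryPoint).mul (continuous_finsetSum _ fun i _ =>
      (hcont i).mul ((hkernel i).comp continuous_boundaryPoint))
  · refine Eventually.of_forall fun R => Eventually.of_forall fun y => ?_
    rw [norm_mul]
    refine (mul_le_of_le_one_left (norm_nonneg _) (norm_cutoff_le_one R _)).trans
      (norm_sum_le_of_le _ fun i _ => ?_)
    rw [norm_mul]
    exact mul_le_mul_of_nonneg_right (hM _ (boundaryPoint_mem_halfSpace y) i) (norm_nonneg _)
  · exact integrable_finsetSum _ fun i _ =>
      (integrable_boundary_decay (hkernel i) (hP.decay_pderiv 0 i)).norm.const_mul M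
  · refine Eventually.of_forall fun y => tendsto_const_nhds.congr' ?_
    filter_upwards [eventually_gt_atTop ‖boundaryPoint y‖] with R hR
    rw [(cutoff_eventuallyEq_one hR).eq_of_nhds, Pi.one_apply, one_mul]

theorem IsSourceField.integral_fieldDiv_mul_fieldDiv_eq_boundary
    (hP : IsSourceField P) (hu : ∀ y ∈ halfSpace N, ∀ i, ContDiffAt ℝ 2 (u i) y)
    (hM : ∀ y ∈ halfSpace N, ∀ i, |u i y| ≤ M) (hk : 1 + k ≠ 0)
    (hlame : ∀ y ∈ halfSpace N, ∀ i, lameOp k u i y = 0) :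
    (2 + k) * ∫ y in halfSpace N, fieldDiv u y * fieldDiv P y =
      4 * ∫ y, ∑ i, u i (boundaryPoint y) * pderiv 0 (P i) (boundaryPoint y) := by
  have hlimit := tendsto_nhds_unique
    ((hP.tendsto_integral_lameOp_cutoff (k := k) hu hM).neg.congr' ?_)
    ((hP.tendsto_integral_boundary_cutoff hu hM).const_mul (4 * (1 + k)))
  · have hpull : ∫ y in halfSpace N, ∑ i, u i y * ((1 + k) * (2 + k) * pderiv i (fieldDiv P) y) =
        (1 + k) * (2 + k) * ∫ y in halfSpace N, ∑ i, u i y * pderiv i (fieldDiv P) y := by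
      simp only [← integral_const_mul, Finset.mul_sum, mul_left_comm]
    rw [hP.integral_fieldDiv_mul_fieldDiv fun y hy i => (hu y hy i).of_le (by norm_num)]
    refine mul_left_cancel₀ hk ?_
    linear_combination hlimit + hpull
  · filter_upwards [eventually_gt_atTop 0] with R hR
    exact hP.green_cutoff hu hlame hR

end RepresentationFormula

section Homogeneity

variable {n : ℕ} {f : Eu n → ℝ} {δ : ℝ} {m : ℕ}

/-- Homogeneity of degree `-m` outside the ball of radius `δ`. -/
def HomogeneousOutside (δ : ℝ) (m : ℕ) (f : Eu n → ℝ) : Prop :=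
  ∀ t z, 1 ≤ t → δ < ‖z‖ → f (t • z) = (t ^ m)⁻¹ * f z

lemma HomogeneousOutside.pderiv (hf : HomogeneousOutside δ m f) (hsmooth : ContDiff ℝ ∞ f)
    (i : Fin n) : HomogeneousOutside δ (m + 1) (pderiv i f) := by
  intro t z ht hz
  have ht0 : t ≠ 0 := by positivity
  have hnear : (fun w => f (t • w)) =ᶠ[𝓝 z] fun w => (t ^ m)⁻¹ * f w := by
    filter_upwards [continuous_norm.continuousAt.eventually (lt_mem_nhds hz)] with w hw
    exact hf t w ht hw
  have hderiv := (pderiv_congr i hnear).eq_of_nhds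
  rw [pderiv_comp_smul, pderiv_const_mul i _ (differentiableAt_of_smooth hsmooth z)] at hderiv
  rw [pow_succ, mul_inv, mul_right_comm, ← hderiv]
  field_simp

lemma HomogeneousOutside.isBigO_decayRate (hf : HomogeneousOutside δ m f) (hδ : 0 < δ)
    (hcont : Continuous f) : f =O[⊤] decayRate m := by
  set r := δ + 1
  have hr : 0 < r := by positivity
  obtain ⟨C, hC⟩ :=
    (isCompact_closedBall (0 : Eu n) r).exists_bound_of_continuousOn hcont.continuousOn
  have hC0 : 0 ≤ C := (norm_nonneg _).trans (hC 0 (by simpa using hr.le))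
  refine Asymptotics.isBigO_top.2 ⟨C * (1 + r) ^ m, fun z => ?_⟩
  rw [norm_of_nonneg (decayRate_pos m z).le, decayRate, mul_assoc, ← div_eq_mul_inv, ← div_pow]
  rcases le_or_gt ‖z‖ r with hz | hz
  · refine (hC z (by simpa using hz)).trans (le_mul_of_one_le_right hC0 (one_le_pow₀ ?_))
    rw [one_le_div (by positivity)]
    linarith
  · set t := ‖z‖ / r
    have ht : 1 ≤ t := (one_le_div hr).2 hz.le
    have ht0 : 0 < t := by positivity
    have hnorm : ‖t⁻¹ • z‖ = r := by
      rw [norm_smul, norm_of_nonneg (by positivity), inv_div, div_mul_cancel₀ _ (by linarith)]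
    have hratio : t⁻¹ ≤ (1 + r) / (1 + ‖z‖) := by
      rw [inv_div, div_le_div_iff₀ (by linarith) (by positivity)]
      linarith
    have hscale := hf t (t⁻¹ • z) ht (by rw [hnorm]; exact lt_add_one δ)
    rw [smul_inv_smul₀ ht0.ne', ← inv_pow] at hscale
    rw [hscale, norm_mul, norm_of_nonneg (by positivity), mul_comm]
    gcongr
    exact hC _ (by simp [hnorm])

end Homogeneity

section RadialField

variable {n : ℕ} {φ : ℝ → ℝ}

/-- The radial vector field `φ(‖z‖²) z`. -/
def radialField (φ : ℝ → ℝ) (i : Fin n) (z : Eu n) : ℝ := φ (‖z‖ ^ 2) * z i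

lemma contDiff_radialField (hφ : ContDiff ℝ ∞ φ) (i : Fin n) :
    ContDiff ℝ ∞ (radialField φ i) :=
  (hφ.comp (contDiff_norm_sq ℝ)).mul (by fun_prop)

lemma pderiv_comp_norm_sq {z : Eu n} (hφ : DifferentiableAt ℝ φ (‖z‖ ^ 2)) (j : Fin n) :
    pderiv j (fun w => φ (‖w‖ ^ 2)) z = 2 * deriv φ (‖z‖ ^ 2) * z j := by
  have hcomp : HasFDerivAt (fun w : Eu n => φ (‖w‖ ^ 2)) _ z :=
    hφ.hasDerivAt.comp_hasFDerivAt z (hasStrictFDerivAt_norm_sq z).hasFDerivAt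
  rw [pderiv, hcomp.fderiv]
  simp [EuclideanSpace.inner_single_right, mul_assoc, mul_left_comm]

lemma pderiv_radialField (hφ : ContDiff ℝ ∞ φ) (i j : Fin n) (z : Eu n) :
    pderiv j (radialField φ i) z =
      2 * deriv φ (‖z‖ ^ 2) * z j * z i + φ (‖z‖ ^ 2) * if j = i then 1 else 0 := by
  have hdiff : Differentiable ℝ φ := hφ.differentiable (by simp)
  have hcomp : DifferentiableAt ℝ (fun w : Eu n => φ (‖w‖ ^ 2)) z :=
    (hdiff _).comp z (contDiff_norm_sq ℝ (n := 1) |>.differentiable one_ne_zero z)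
  unfold radialField
  rw [pderiv_mul j hcomp (by fun_prop), pderiv_comp_norm_sq (hdiff _), pderiv_coord]

lemma pderiv_radialField_symm (hφ : ContDiff ℝ ∞ φ) (i j : Fin n) :
    pderiv i (radialField φ j) = pderiv j (radialField φ i) := by
  ext z
  rw [pderiv_radialField hφ, pderiv_radialField hφ]
  simp only [eq_comm (a := i)]
  ring

lemma fieldDiv_radialField (hφ : ContDiff ℝ ∞ φ) (z : Eu n) :
    fieldDiv (radialField φ) z = 2 * deriv φ (‖z‖ ^ 2) * ‖z‖ ^ 2 + n * φ (‖z‖ ^ 2) := by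
  have hnorm : ‖z‖ ^ 2 = ∑ j, z j * z j := by
    simp only [EuclideanSpace.real_norm_sq_eq, ← sq]
  simp only [fieldDiv, pderiv_radialField hφ, Finset.sum_add_distrib, mul_assoc, ← Finset.mul_sum,
    ← hnorm]
  simp [mul_comm]

end RadialField

section PointCharge

variable {N : ℕ} {δ s : ℝ}

/-- A smooth nondecreasing function equal to `0` on `(-∞, δ²/2]` and to `1` on `[δ², ∞)`. -/
def smoothStep (δ s : ℝ) : ℝ := Real.smoothTransition (2 * s / δ ^ 2 - 1)

@[fun_prop]
lemma contDiff_smoothStep : ContDiff ℝ ∞ (smoothStep δ) :=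
  Real.smoothTransition.contDiff.comp (by fun_prop)

lemma monotone_smoothStep : Monotone (smoothStep δ) := fun _ _ hst =>
  Real.smoothTransition.monotone (by gcongr)

lemma smoothStep_eq_zero (hδ : 0 < δ) (hs : s ≤ δ ^ 2 / 2) : smoothStep δ s = 0 := by
  refine Real.smoothTransition.zero_of_nonpos (sub_nonpos.2 ((div_le_one (by positivity)).2 ?_))
  linarith

lemma smoothStep_eq_one (hδ : 0 < δ) (hs : δ ^ 2 ≤ s) : smoothStep δ s = 1 := by
  refine Real.smoothTransition.one_of_one_le ?_
  rw [le_sub_iff_add_le, le_div_iff₀ (by positivity)]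
  linarith

lemma deriv_smoothStep_eq_zero (hδ : 0 < δ) (hs : δ ^ 2 < s) : deriv (smoothStep δ) s = 0 := by
  have hnear : smoothStep δ =ᶠ[𝓝 s] fun _ => 1 := by
    filter_upwards [lt_mem_nhds hs] with t ht
    exact smoothStep_eq_one hδ ht.le
  rw [hnear.deriv_eq, deriv_const]

/-- The profile `s ↦ s^{-(N+1)/2}` of the field `z/‖z‖^{N+1}` of a point charge, smoothed out near
the charge. -/
def chargeProfile (N : ℕ) (δ s : ℝ) : ℝ := smoothStep δ s * (√s ^ (N + 1))⁻¹

lemma hasDerivAt_chargeProfile (hs : 0 < s) :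
    HasDerivAt (chargeProfile N δ) (deriv (smoothStep δ) s * (√s ^ (N + 1))⁻¹
      - (N + 1) / 2 * smoothStep δ s * (√s ^ (N + 3))⁻¹) s := by
  have hsqrt : √s ≠ 0 := (Real.sqrt_pos.2 hs).ne'
  have hstep : HasDerivAt (smoothStep δ) (deriv (smoothStep δ) s) s :=
    (contDiff_smoothStep.differentiable (by simp) s).hasDerivAt
  have hpow := ((Real.hasDerivAt_sqrt hs.ne').pow (N + 1)).inv (pow_ne_zero _ hsqrt)
  refine (hstep.mul hpow).congr_deriv ?_
  simp only [Pi.inv_apply, Pi.pow_apply]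
  push_cast
  field_simp
  ring

lemma contDiff_chargeProfile (hδ : 0 < δ) : ContDiff ℝ ∞ (chargeProfile N δ) := by
  refine contDiff_iff_contDiffAt.2 fun s => ?_
  rcases le_or_gt s 0 with hs | hs
  · refine (contDiffAt_const (c := (0 : ℝ))).congr_of_eventuallyEq ?_
    filter_upwards [gt_mem_nhds (hs.trans_lt (by positivity : 0 < δ ^ 2 / 2))] with t ht
    rw [chargeProfile, smoothStep_eq_zero hδ ht.le, zero_mul]
  · exact contDiff_smoothStep.contDiffAt.mul (((contDiffAt_sqrt hs.ne').pow _).inv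
      (pow_ne_zero _ (Real.sqrt_pos.2 hs).ne'))

/-- The field of a unit-strength point charge at the origin, smoothed out inside the ball of radius
`δ`. -/
def chargeField (δ : ℝ) : Fin (N + 1) → Eu (N + 1) → ℝ := radialField (chargeProfile N δ)

lemma chargeField_of_lt_norm (hδ : 0 < δ) (i : Fin (N + 1)) {z : Eu (N + 1)} (hz : δ < ‖z‖) :
    chargeField δ i z = (‖z‖ ^ (N + 1))⁻¹ * z i := by
  have hsq : δ ^ 2 ≤ ‖z‖ ^ 2 := by gcongr
  rw [chargeField, radialField, chargeProfile, smoothStep_eq_one hδ hsq, one_mul,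
    Real.sqrt_sq (norm_nonneg z)]

lemma pderiv_chargeField_of_lt_norm (hδ : 0 < δ) (i j : Fin (N + 1)) {z : Eu (N + 1)}
    (hz : δ < ‖z‖) : pderiv j (chargeField δ i) z =
      (if j = i then (‖z‖ ^ (N + 1))⁻¹ else 0) - (N + 1) * z j * z i * (‖z‖ ^ (N + 3))⁻¹ := by
  have hsq : δ ^ 2 < ‖z‖ ^ 2 := by gcongr
  rw [chargeField, pderiv_radialField (contDiff_chargeProfile hδ),
    (hasDerivAt_chargeProfile ((sq_nonneg δ).trans_lt hsq)).deriv, chargeProfile,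
    deriv_smoothStep_eq_zero hδ hsq, smoothStep_eq_one hδ hsq.le, Real.sqrt_sq (norm_nonneg z)]
  split_ifs <;> ring

lemma fieldDiv_chargeField (hδ : 0 < δ) (z : Eu (N + 1)) : fieldDiv (chargeField δ) z =
    2 * deriv (smoothStep δ) (‖z‖ ^ 2) * (‖z‖ ^ 2 * (‖z‖ ^ (N + 1))⁻¹) := by
  rw [chargeField, fieldDiv_radialField (contDiff_chargeProfile hδ)]
  rcases eq_or_ne z 0 with rfl | hz
  · simp [chargeProfile, smoothStep_eq_zero hδ (by positivity : 0 ≤ δ ^ 2 / 2)]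
  · have hnorm : 0 < ‖z‖ := norm_pos_iff.2 hz
    rw [(hasDerivAt_chargeProfile (by positivity)).deriv, chargeProfile, Real.sqrt_sq hnorm.le]
    push_cast
    field_simp
    ring

lemma fieldDiv_chargeField_nonneg (hδ : 0 < δ) (z : Eu (N + 1)) :
    0 ≤ fieldDiv (chargeField δ) z := by
  have hmono := monotone_smoothStep (δ := δ) |>.deriv_nonneg (x := ‖z‖ ^ 2)
  rw [fieldDiv_chargeField hδ]
  positivity

lemma fieldDiv_chargeField_of_lt_norm (hδ : 0 < δ) {z : Eu (N + 1)} (hz : δ < ‖z‖) :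
    fieldDiv (chargeField δ) z = 0 := by
  rw [fieldDiv_chargeField hδ, deriv_smoothStep_eq_zero hδ (by gcongr), mul_zero, zero_mul]

lemma homogeneousOutside_chargeField (hδ : 0 < δ) (i : Fin (N + 1)) :
    HomogeneousOutside δ N (chargeField δ i) := by
  intro t z ht hz
  have hnorm : ‖t • z‖ = t * ‖z‖ := by rw [norm_smul, norm_of_nonneg (by linarith)]
  have htz : δ < ‖t • z‖ := by
    rw [hnorm]
    exact hz.trans_le (le_mul_of_one_le_left (norm_nonneg z) ht)
  have hz0 : 0 < ‖z‖ := hδ.trans hz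
  rw [chargeField_of_lt_norm hδ i htz, chargeField_of_lt_norm hδ i hz, hnorm, PiLp.smul_apply,
    smul_eq_mul]
  field_simp
  ring

lemma sum_sq_pderiv_chargeField (hδ : 0 < δ) (j : Fin (N + 1)) {z : Eu (N + 1)}
    (hz : δ < ‖z‖) : ∑ i, pderiv j (chargeField δ i) z ^ 2 =
      (‖z‖ ^ (N + 1))⁻¹ ^ 2 * (1 + (N + 1) * (N - 1) * z j ^ 2 / ‖z‖ ^ 2) := by
  have hz0 : 0 < ‖z‖ := hδ.trans hz
  set a := (‖z‖ ^ (N + 1))⁻¹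
  set b := (N + 1) * z j * (‖z‖ ^ (N + 3))⁻¹
  have hterm (i : Fin (N + 1)) : pderiv j (chargeField δ i) z ^ 2 =
      (if j = i then a ^ 2 - 2 * a * b * z i else 0) + b ^ 2 * z i ^ 2 := by
    rw [pderiv_chargeField_of_lt_norm hδ i j hz]
    split_ifs <;> ring
  simp only [hterm, Finset.sum_add_distrib, Finset.sum_ite_eq, Finset.mem_univ, if_true,
    ← Finset.mul_sum, ← EuclideanSpace.real_norm_sq_eq, a, b]
  field_simp
  ring

end PointCharge

section TotalCharge

variable {N : ℕ} {δ : ℝ}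

lemma sphereArea_eq_mul_volume_ball {n : ℕ} (hn : 0 < n) :
    sphereArea n = n * (volume : Measure (Eu n)).real (ball 0 1) := by
  have : Nonempty (Fin n) := ⟨⟨0, hn⟩⟩
  have : (0 : ℝ) < n := mod_cast hn
  have hpow : √π ^ n = π ^ ((n : ℝ) / 2) := by
    rw [Real.sqrt_eq_rpow, ← Real.rpow_natCast, ← Real.rpow_mul Real.pi_pos.le]
    ring_nf
  have : 0 < Real.Gamma ((n : ℝ) / 2) := Real.Gamma_pos_of_pos (by positivity)
  rw [measureReal_def, EuclideanSpace.volume_ball, Fintype.card_fin, ENNReal.ofReal_one, one_pow,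
    one_mul, Real.Gamma_add_one (by positivity), ENNReal.toReal_ofReal (by positivity), hpow,
    sphereArea]
  field_simp

lemma sphereArea_pos {n : ℕ} (hn : 0 < n) : 0 < sphereArea n := by
  have : Nonempty (Fin n) := ⟨⟨0, hn⟩⟩
  have : 0 < Real.Gamma ((n : ℝ) / 2) := Real.Gamma_pos_of_pos (by positivity)
  unfold sphereArea
  positivity

lemma integral_comp_norm {n : ℕ} (hn : 0 < n) (f : ℝ → ℝ) :
    ∫ z : Eu n, f ‖z‖ = sphereArea n * ∫ r in Set.Ioi (0 : ℝ), r ^ (n - 1) * f r := by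
  have : Nonempty (Fin n) := ⟨⟨0, hn⟩⟩
  rw [integral_fun_norm_addHaar volume f, sphereArea_eq_mul_volume_ball hn]
  simp [mul_assoc]

lemma integral_fieldDiv_chargeField (hδ : 0 < δ) :
    ∫ z, fieldDiv (chargeField (N := N) δ) z = sphereArea (N + 1) := by
  have hderiv (r : ℝ) : HasDerivAt (fun r => smoothStep δ (r ^ 2))
      (deriv (smoothStep δ) (r ^ 2) * (2 * r)) r :=
    ((contDiff_smoothStep.differentiable (by simp) _).hasDerivAt.comp r
      (hasDerivAt_pow 2 r)).congr_deriv (by simp)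
  have hlim : Tendsto (fun r => smoothStep δ (r ^ 2)) atTop (𝓝 1) := by
    refine tendsto_const_nhds.congr' ?_
    filter_upwards [eventually_ge_atTop δ] with r hr
    exact (smoothStep_eq_one hδ (by gcongr)).symm
  have hradial (r : ℝ) (hr : r ∈ Set.Ioi (0 : ℝ)) :
      r ^ (N + 1 - 1) * (2 * deriv (smoothStep δ) (r ^ 2) * (r ^ 2 * (r ^ (N + 1))⁻¹)) =
        deriv (smoothStep δ) (r ^ 2) * (2 * r) := by
    have hr0 : r ≠ 0 := ne_of_gt hr
    rw [Nat.add_sub_cancel]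
    field_simp
    ring
  simp only [fieldDiv_chargeField hδ]
  rw [integral_comp_norm N.succ_pos fun r =>
      2 * deriv (smoothStep δ) (r ^ 2) * (r ^ 2 * (r ^ (N + 1))⁻¹),
    setIntegral_congr_fun measurableSet_Ioi hradial,
    integral_Ioi_of_hasDerivAt_of_nonneg' (fun r _ => hderiv r) (fun r hr => ?_) hlim,
    smoothStep_eq_zero hδ (by rw [zero_pow two_ne_zero]; positivity)]
  · simp
  · exact mul_nonneg monotone_smoothStep.deriv_nonneg (by linarith [Set.mem_Ioi.1 hr])

end TotalCharge

section ChargeInHalfSpace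

variable {N : ℕ} {δ : ℝ}

/-- The inner unit normal of the half-space, viewed as the point at which the charge is placed. -/
def pole (N : ℕ) : Eu (N + 1) := EuclideanSpace.single 0 1

@[simp]
lemma pole_zero : pole N 0 = 1 := by simp [pole]

@[simp]
lemma pole_succ (i : Fin N) : pole N i.succ = 0 := by simp [pole]

lemma closedBall_pole_subset {r : ℝ} : closedBall (pole N) r ⊆ {y | 1 - r ≤ y 0} := by
  intro y hy
  have hcoord := (abs_coord_le_norm (y - pole N) 0).trans (mem_closedBall_iff_norm.1 hy)
  rw [PiLp.sub_apply, pole_zero] at hcoord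
  have hlow := (abs_le.1 hcoord).1
  rw [Set.mem_ofPred_eq]
  linarith

lemma closedBall_pole_subset_halfSpace : closedBall (pole N) 1 ⊆ halfSpace N :=
  closedBall_pole_subset.trans_eq (by simp [halfSpace])

lemma pole_mem_halfSpace : pole N ∈ halfSpace N :=
  closedBall_pole_subset_halfSpace (mem_closedBall_self zero_le_one)

lemma norm_sq_boundaryPoint_sub_pole (y : Eu N) : ‖boundaryPoint y - pole N‖ ^ 2 = 1 + ‖y‖ ^ 2 := by
  simp [EuclideanSpace.real_norm_sq_eq, Fin.sum_univ_succ]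

lemma one_le_norm_boundaryPoint_sub_pole (y : Eu N) : 1 ≤ ‖boundaryPoint y - pole N‖ := by
  rw [← one_le_sq_iff₀ (norm_nonneg _), norm_sq_boundaryPoint_sub_pole]
  linarith [sq_nonneg ‖y‖]

/-- The field of a charge at the pole, smoothed out inside the ball of radius `δ`. -/
def poleField (δ : ℝ) (i : Fin (N + 1)) (y : Eu (N + 1)) : ℝ := chargeField δ i (y - pole N)

lemma pderiv_poleField (i j : Fin (N + 1)) :
    pderiv j (poleField δ i) = fun y : Eu (N + 1) => pderiv j (chargeField δ i) (y - pole N) :=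
  pderiv_comp_sub j (chargeField δ i) (pole N)

lemma fieldDiv_poleField (y : Eu (N + 1)) :
    fieldDiv (poleField δ) y = fieldDiv (chargeField δ) (y - pole N) := by
  simp only [fieldDiv, pderiv_poleField]

lemma support_fieldDiv_poleField_subset (hδ : 0 < δ) :
    Function.support (fieldDiv (poleField δ)) ⊆ closedBall (pole N) δ := by
  refine Function.support_subset_iff'.2 fun y hy => ?_
  rw [mem_closedBall_iff_norm, not_le] at hy
  rw [fieldDiv_poleField, fieldDiv_chargeField_of_lt_norm hδ hy]

lemma integral_fieldDiv_poleField (hδ : 0 < δ) :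
    ∫ y, fieldDiv (poleField (N := N) δ) y = sphereArea (N + 1) := by
  simp only [fieldDiv_poleField]
  rw [integral_sub_right_eq_self, integral_fieldDiv_chargeField hδ]

lemma isSourceField_poleField (hδ : 0 < δ) (hδ1 : δ < 1) :
    IsSourceField (poleField (N := N) δ) := by
  have hsmooth (i : Fin (N + 1)) : ContDiff ℝ ∞ (chargeField δ i) :=
    contDiff_radialField (contDiff_chargeProfile hδ) i
  have hhom (i : Fin (N + 1)) := homogeneousOutside_chargeField hδ i
  have htsupp : tsupport (fieldDiv (poleField (N := N) δ)) ⊆ closedBall (pole N) δ :=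
    closure_minimal (support_fieldDiv_poleField_subset hδ) isClosed_closedBall
  refine ⟨fun i => (hsmooth i).comp (by fun_prop), fun i j => ?_,
    (isCompact_closedBall _ _).of_isClosed_subset (isClosed_tsupport _) htsupp, fun y hy => ?_,
    fun i => ?_, fun i j => ?_, fun i j l => ?_⟩
  · rw [pderiv_poleField, pderiv_poleField, chargeField,
      pderiv_radialField_symm (contDiff_chargeProfile hδ)]
  · exact (sub_pos.2 hδ1).trans_le (closedBall_pole_subset (htsupp hy))
  · exact isBigO_decayRate_comp_sub ((hhom i).isBigO_decayRate hδ (hsmooth i).continuous) _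
  · rw [pderiv_poleField]
    exact isBigO_decayRate_comp_sub (((hhom j).pderiv (hsmooth j) i).isBigO_decayRate hδ
      (contDiff_pderiv i (hsmooth j)).continuous) _
  · have hj := contDiff_pderiv j (hsmooth l)
    rw [pderiv_poleField, pderiv_comp_sub]
    exact isBigO_decayRate_comp_sub ((((hhom l).pderiv (hsmooth l) j).pderiv hj i).isBigO_decayRate
      hδ (contDiff_pderiv i hj).continuous) _

lemma exists_integral_mul_fieldDiv_poleField_eq (hδ : 0 < δ) (hδ1 : δ < 1) {g : Eu (N + 1) → ℝ}
    (hg : ContinuousOn g (halfSpace N)) : ∃ c ∈ closedBall (pole N) δ,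
      ∫ y in halfSpace N, g y * fieldDiv (poleField δ) y = g c * sphereArea (N + 1) := by
  have hball : closedBall (pole N) δ ⊆ halfSpace N :=
    (closedBall_subset_closedBall hδ1.le).trans closedBall_pole_subset_halfSpace
  have hgB : ContinuousOn g (closedBall (pole N) δ) := hg.mono hball
  have hcont : Continuous (fieldDiv (poleField (N := N) δ)) :=
    (contDiff_fieldDiv (isSourceField_poleField hδ hδ1).contDiff).continuous
  have hout (y : Eu (N + 1)) (hy : y ∉ closedBall (pole N) δ) : fieldDiv (poleField δ) y = 0 :=
    Function.support_subset_iff'.1 (support_fieldDiv_poleField_subset hδ) y hy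
  have hnonneg (y : Eu (N + 1)) : 0 ≤ fieldDiv (poleField δ) y := by
    rw [fieldDiv_poleField]
    exact fieldDiv_chargeField_nonneg hδ _
  obtain ⟨c, hc, hmean⟩ := exists_eq_const_mul_setIntegral_of_nonneg (μ := volume)
    ((convex_closedBall (pole N) δ).isConnected ⟨_, mem_closedBall_self hδ.le⟩)
    measurableSet_closedBall hgB
    (hcont.continuousOn.integrableOn_compact (isCompact_closedBall _ _))
    ((hgB.mul hcont.continuousOn).integrableOn_compact (isCompact_closedBall _ _))
    fun y _ => hnonneg y
  refine ⟨c, hc, ?_⟩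
  rw [← integral_fieldDiv_poleField hδ, ← setIntegral_eq_integral_of_forall_compl_eq_zero hout,
    ← hmean]
  exact setIntegral_eq_of_subset_of_forall_sdiff_eq_zero measurableSet_halfSpace hball
    fun y hy => by rw [hout y hy.2, mul_zero]

end ChargeInHalfSpace

section BoundaryKernel

variable {N : ℕ} {δ : ℝ}

/-- The vector by which the boundary values of a Lamé field at `(0, y)` enter the representation of
its divergence at the pole, up to a constant factor. -/
def boundaryKernel (δ : ℝ) (y : Eu N) : Eu (N + 1) :=
  WithLp.toLp 2 fun i => pderiv 0 (poleField δ i) (boundaryPoint y)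

/-- The length of `boundaryKernel δ y` as a function of `s = ‖y‖`. -/
def kernelProfile (N : ℕ) (s : ℝ) : ℝ :=
  (√(1 + s ^ 2) ^ (N + 1))⁻¹ * √(1 + (N + 1) * (N - 1) / (1 + s ^ 2))

lemma norm_boundaryKernel (hδ : 0 < δ) (hδ1 : δ < 1) (y : Eu N) :
    ‖boundaryKernel δ y‖ = kernelProfile N ‖y‖ := by
  have hfar : δ < ‖boundaryPoint y - pole N‖ :=
    hδ1.trans_le (one_le_norm_boundaryPoint_sub_pole y)
  have hsqrt : ‖boundaryPoint y - pole N‖ = √(1 + ‖y‖ ^ 2) := by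
    rw [← norm_sq_boundaryPoint_sub_pole, Real.sqrt_sq (norm_nonneg _)]
  rw [EuclideanSpace.norm_eq]
  simp only [boundaryKernel, pderiv_poleField, norm_eq_abs, sq_abs]
  rw [sum_sq_pderiv_chargeField hδ 0 hfar, Real.sqrt_mul (by positivity),
    Real.sqrt_sq (by positivity), norm_sq_boundaryPoint_sub_pole, hsqrt]
  simp [kernelProfile]

lemma integrable_boundaryKernel (hδ : 0 < δ) (hδ1 : δ < 1) :
    Integrable (boundaryKernel δ : Eu N → Eu (N + 1)) := by
  have hP := isSourceField_poleField (N := N) hδ hδ1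
  exact Integrable.of_eval_piLp fun i => integrable_boundary_decay
    (contDiff_pderiv 0 (hP.contDiff i)).continuous (hP.decay_pderiv 0 i)

lemma tan_image_Ioo_zero_pi_div_two : Real.tan '' Set.Ioo 0 (π / 2) = Set.Ioi 0 := by
  ext t
  constructor
  · rintro ⟨θ, hθ, rfl⟩
    exact Real.tan_pos_of_pos_of_lt_pi_div_two hθ.1 hθ.2
  · exact fun ht => ⟨Real.arctan t, ⟨Real.arctan_pos.2 ht, Real.arctan_lt_pi_div_two t⟩,
      Real.tan_arctan t⟩

lemma integral_Ioi_eq_integral_tan (f : ℝ → ℝ) :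
    ∫ t in Set.Ioi (0 : ℝ), f t = ∫ θ in (0 : ℝ)..π / 2, (cos θ ^ 2)⁻¹ * f (tan θ) := by
  have hsub : Set.Ioo 0 (π / 2) ⊆ Set.Ioo (-(π / 2)) (π / 2) :=
    Set.Ioo_subset_Ioo_left (by linarith [Real.pi_pos])
  rw [← tan_image_Ioo_zero_pi_div_two, integral_image_eq_integral_abs_deriv_smul measurableSet_Ioo
    (fun θ hθ => (Real.hasDerivAt_tan (cos_pos_of_mem_Ioo (hsub hθ)).ne').hasDerivWithinAt)
    (Real.injOn_tan.mono hsub), intervalIntegral.integral_of_le (by positivity),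
    integral_Ioc_eq_integral_Ioo]
  simp

lemma kernelProfile_tan (hN : 1 ≤ N) {θ : ℝ} (hθ : 0 < cos θ) :
    (cos θ ^ 2)⁻¹ * (tan θ ^ (N - 1) * kernelProfile N (tan θ)) =
      √(1 + (N + 1) * (N - 1) * cos θ ^ 2) * sin θ ^ (N - 1) := by
  obtain ⟨m, rfl⟩ := Nat.exists_eq_add_of_le' hN
  have hsec : 1 + tan θ ^ 2 = (cos θ ^ 2)⁻¹ := (inv_one_add_tan_sq hθ.ne') ▸ (inv_inv _).symm
  rw [kernelProfile, hsec, Real.sqrt_inv, Real.sqrt_sq hθ.le, div_inv_eq_mul, tan_eq_sin_div_cos,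
    Nat.add_sub_cancel]
  simp only [div_pow, inv_pow]
  generalize √_ = root
  field_simp
  ring

lemma integral_kernelProfile (hN : 1 ≤ N) :
    4 * ∫ y : Eu N, kernelProfile N ‖y‖ = Econst (N + 1) * sphereArea (N + 1) := by
  have harea := (sphereArea_pos N.succ_pos).ne'
  have hcongr : ∫ θ in (0 : ℝ)..π / 2,
      (cos θ ^ 2)⁻¹ * (tan θ ^ (N - 1) * kernelProfile N (tan θ)) =
      ∫ θ in (0 : ℝ)..π / 2, √(1 + (N + 1) * (N - 1) * cos θ ^ 2) * sin θ ^ (N - 1) := by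
    simp only [intervalIntegral.integral_of_le (by positivity : 0 ≤ π / 2),
      integral_Ioc_eq_integral_Ioo]
    refine setIntegral_congr_fun measurableSet_Ioo fun θ hθ => kernelProfile_tan hN ?_
    exact cos_pos_of_mem_Ioo ⟨by linarith [hθ.1, Real.pi_pos], hθ.2⟩
  rw [integral_comp_norm hN, integral_Ioi_eq_integral_tan, hcongr, Econst, Nat.add_sub_cancel,
    show N + 1 - 2 = N - 1 by omega]
  push_cast
  field_simp
  ring_nf

end BoundaryKernel

section HalfSpaceEstimate

variable {N : ℕ} {k M : ℝ} {u : Eu (N + 1) → Eu (N + 1)}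

lemma abs_integral_boundary_le {δ : ℝ} (hδ : 0 < δ) (hδ1 : δ < 1)
    (hM : ∀ y ∈ halfSpace N, ‖u y‖ ≤ M) :
    |∫ y, ∑ i, u (boundaryPoint y) i * pderiv 0 (poleField δ i) (boundaryPoint y)| ≤
      M * ∫ y : Eu N, kernelProfile N ‖y‖ := by
  simp only [← norm_boundaryKernel hδ hδ1]
  rw [← integral_const_mul, ← norm_eq_abs]
  refine norm_integral_le_of_norm_le ((integrable_boundaryKernel hδ hδ1).norm.const_mul M)
    (Eventually.of_forall fun y => ?_)
  have hinner : ∑ i, u (boundaryPoint y) i * pderiv 0 (poleField δ i) (boundaryPoint y) =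
      ⟪boundaryKernel δ y, u (boundaryPoint y)⟫ := by
    simp [PiLp.inner_apply, boundaryKernel]
  rw [hinner, mul_comm M]
  exact (norm_inner_le_norm _ _).trans
    (mul_le_mul_of_nonneg_left (hM _ (boundaryPoint_mem_halfSpace y)) (norm_nonneg _))

lemma continuousOn_divg {n : ℕ} {u : Eu n → Eu n} {s : Set (Eu n)}
    (hu : ∀ y ∈ s, ContDiffAt ℝ 2 u y) : ContinuousOn (divg u) s := fun y hy =>
  (contDiffAt_fieldDiv ((contDiffAt_piLp 2).1 (hu y hy))).continuousAt.continuousWithinAt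

lemma exists_mem_closedBall_pole_abs_divg_le {δ : ℝ} (hδ : 0 < δ) (hδ1 : δ < 1) (hN : 1 ≤ N)
    (hk : -1 < k) (hu : ∀ y ∈ halfSpace N, ContDiffAt ℝ 2 u y)
    (hlame : ∀ y ∈ halfSpace N, ∀ i, lameOp k (fun i z => u z i) i y = 0)
    (hM : ∀ y ∈ halfSpace N, ‖u y‖ ≤ M) :
    ∃ c ∈ closedBall (pole N) δ, |divg u c| ≤ Econst (N + 1) / (2 + k) * M := by
  have h2k : 0 < 2 + k := by linarith
  have harea : 0 < sphereArea (N + 1) := sphereArea_pos N.succ_pos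
  obtain ⟨c, hc, hmean⟩ :=
    exists_integral_mul_fieldDiv_poleField_eq hδ hδ1 (continuousOn_divg hu)
  refine ⟨c, hc, ?_⟩
  have hrepr := (isSourceField_poleField hδ hδ1).integral_fieldDiv_mul_fieldDiv_eq_boundary
    (fun y hy => (contDiffAt_piLp 2).1 (hu y hy))
    (fun y hy i => (abs_coord_le_norm (u y) i).trans (hM y hy)) (by linarith) hlame
  have hscaled : (2 + k) * (|divg u c| * sphereArea (N + 1)) ≤
      M * (Econst (N + 1) * sphereArea (N + 1)) := by
    calc (2 + k) * (|divg u c| * sphereArea (N + 1))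
        = |(2 + k) * ∫ y in halfSpace N, divg u y * fieldDiv (poleField δ) y| := by
          rw [hmean, abs_mul, abs_mul, abs_of_pos h2k, abs_of_pos harea]
      _ = 4 * |∫ y, ∑ i, u (boundaryPoint y) i * pderiv 0 (poleField δ i) (boundaryPoint y)| := by
          rw [← abs_of_pos (four_pos (α := ℝ)), ← abs_mul]
          exact congrArg abs hrepr
      _ ≤ 4 * (M * ∫ y : Eu N, kernelProfile N ‖y‖) :=
          mul_le_mul_of_nonneg_left (abs_integral_boundary_le hδ hδ1 hM) zero_le_four
      _ = M * (Econst (N + 1) * sphereArea (N + 1)) := by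
          rw [← integral_kernelProfile hN, mul_left_comm]
  rw [div_mul_eq_mul_div, le_div_iff₀ h2k]
  refine le_of_mul_le_mul_right ?_ harea
  linarith

theorem abs_divg_pole_le (hN : 1 ≤ N) (hk : -1 < k)
    (hu : ∀ y ∈ halfSpace N, ContDiffAt ℝ 2 u y)
    (hlame : ∀ y ∈ halfSpace N, ∀ i, lameOp k (fun i z => u z i) i y = 0)
    (hM : ∀ y ∈ halfSpace N, ‖u y‖ ≤ M) :
    |divg u (pole N)| ≤ Econst (N + 1) / (2 + k) * M := by
  have hclosed : IsClosed {y ∈ halfSpace N | |divg u y| ≤ Econst (N + 1) / (2 + k) * M} :=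
    isClosed_halfSpace.isClosed_le (continuousOn_divg hu).abs continuousOn_const
  suffices hmem : pole N ∈ closure {y ∈ halfSpace N | |divg u y| ≤ Econst (N + 1) / (2 + k) * M}
    from (hclosed.closure_subset hmem).2
  refine Metric.mem_closure_iff.2 fun ε hε => ?_
  obtain ⟨δ, hδ, hδε⟩ := exists_between (lt_min hε one_pos)
  obtain ⟨hδε, hδ1⟩ := lt_min_iff.1 hδε
  obtain ⟨c, hc, hle⟩ := exists_mem_closedBall_pole_abs_divg_le hδ hδ1 hN hk hu hlame hM
  exact ⟨c, ⟨closedBall_pole_subset_halfSpace (closedBall_subset_closedBall hδ1.le hc), hle⟩,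
    (dist_comm _ _).trans_lt ((mem_closedBall.1 hc).trans_lt hδε)⟩

end HalfSpaceEstimate

section Similarity

open scoped Laplacian
open InnerProductSpace (laplacian_eq_iteratedFDeriv_orthonormalBasis)

variable {E F : Type*} [NormedAddCommGroup E] [InnerProductSpace ℝ E] [NormedAddCommGroup F]
  [NormedSpace ℝ F] {f : E → F} {A : E ≃ₗᵢ[ℝ] E} {q y : E} {c : ℝ}

/-- The similarity of ratio `c` with linear part `c • A` sending the origin to `q`. -/
def similarity (A : E ≃ₗᵢ[ℝ] E) (q : E) (c : ℝ) (y : E) : E := q + c • A y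

lemma hasFDerivAt_similarity :
    HasFDerivAt (similarity A q c) (c • (A : E →L[ℝ] E)) y :=
  ((A : E →L[ℝ] E).hasFDerivAt.const_smul c).const_add q

lemma contDiff_similarity {m : WithTop ℕ∞} : ContDiff ℝ m (similarity A q c) :=
  contDiff_const.add (A.contDiff.const_smul c)

lemma fderiv_comp_similarity (hf : DifferentiableAt ℝ f (similarity A q c y)) :
    fderiv ℝ (f ∘ similarity A q c) y =
      (fderiv ℝ f (similarity A q c y)).comp (c • (A : E →L[ℝ] E)) :=
  (hf.hasFDerivAt.comp y hasFDerivAt_similarity).fderiv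

lemma eventually_contDiffAt_similarity (hf : ContDiffAt ℝ 2 f (similarity A q c y)) :
    ∀ᶠ z in 𝓝 y, ContDiffAt ℝ 2 f (similarity A q c z) :=
  (contDiff_similarity (m := 0)).continuous.continuousAt.eventually (hf.eventually (by simp))

lemma fderiv_fderiv_comp_similarity (hf : ContDiffAt ℝ 2 f (similarity A q c y)) (v w : E) :
    fderiv ℝ (fderiv ℝ (f ∘ similarity A q c)) y v w =
      c ^ 2 • fderiv ℝ (fderiv ℝ f) (similarity A q c y) (A v) (A w) := by
  have hev : fderiv ℝ (f ∘ similarity A q c) =ᶠ[𝓝 y]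
      ContinuousLinearMap.precomp F (c • (A : E →L[ℝ] E)) ∘ fderiv ℝ f ∘ similarity A q c := by
    filter_upwards [eventually_contDiffAt_similarity hf] with z hz
    exact fderiv_comp_similarity (hz.differentiableAt two_ne_zero)
  have hfderiv : DifferentiableAt ℝ (fderiv ℝ f) (similarity A q c y) :=
    (hf.fderiv_right (m := 1) one_add_one_eq_two.le).differentiableAt one_ne_zero
  rw [hev.fderiv_eq, ((ContinuousLinearMap.precomp F _).hasFDerivAt.comp y
    (hfderiv.hasFDerivAt.comp y hasFDerivAt_similarity)).fderiv]
  simp [smul_smul, sq]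

lemma laplacian_eq_sum_fderiv [FiniteDimensional ℝ E] {ι : Type*} [Fintype ι]
    (b : OrthonormalBasis ι ℝ E) (f : E → F) (y : E) :
    Δ f y = ∑ i, fderiv ℝ (fderiv ℝ f) y (b i) (b i) := by
  simp [laplacian_eq_iteratedFDeriv_orthonormalBasis f b, iteratedFDeriv_two_apply]

lemma laplacian_comp_similarity [FiniteDimensional ℝ E]
    (hf : ContDiffAt ℝ 2 f (similarity A q c y)) :
    Δ (f ∘ similarity A q c) y = c ^ 2 • Δ f (similarity A q c y) := by
  rw [laplacian_eq_sum_fderiv (stdOrthonormalBasis ℝ E),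
    laplacian_eq_sum_fderiv ((stdOrthonormalBasis ℝ E).map A), Finset.smul_sum]
  simp only [fderiv_fderiv_comp_similarity hf, OrthonormalBasis.map_apply]

end Similarity

section LameForm

open scoped Laplacian
open InnerProductSpace (laplacian_CLE_comp_left)

variable {n : ℕ} {k c : ℝ} {u : Eu n → Eu n} {A : Eu n ≃ₗᵢ[ℝ] Eu n} {q y : Eu n}

lemma divg_eq_trace (hu : DifferentiableAt ℝ u y) :
    divg u y = LinearMap.trace ℝ (Eu n) (fderiv ℝ u y) := by
  rw [LinearMap.trace_eq_sum_inner _ (EuclideanSpace.basisFun (Fin n) ℝ)]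
  refine Finset.sum_congr rfl fun i _ => ?_
  have hcoord : fderiv ℝ (fun z => u z i) y = (EuclideanSpace.proj i).comp (fderiv ℝ u y) :=
    ((EuclideanSpace.proj i : Eu n →L[ℝ] ℝ).hasFDerivAt.comp y hu.hasFDerivAt).fderiv
  simp [hcoord, EuclideanSpace.inner_single_left]

lemma lapl_eq_laplacian {f : Eu n → ℝ} (hf : ContDiffAt ℝ 2 f y) : lapl f y = Δ f y := by
  have hfderiv : DifferentiableAt ℝ (fderiv ℝ f) y :=
    (hf.fderiv_right (m := 1) one_add_one_eq_two.le).differentiableAt one_ne_zero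
  rw [laplacian_eq_sum_fderiv (EuclideanSpace.basisFun (Fin n) ℝ)]
  refine Finset.sum_congr rfl fun i _ => ?_
  rw [fderiv_clm_apply hfderiv (differentiableAt_const _)]
  simp

lemma lapl_coord_eq_laplacian (hu : ContDiffAt ℝ 2 u y) (i : Fin n) :
    lapl (fun z => u z i) y = Δ u y i := by
  rw [lapl_eq_laplacian ((contDiffAt_piLp 2).1 hu i)]
  exact hu.laplacian_CLM_comp_left (l := EuclideanSpace.proj i)

/-- The value at `y` of the Lamé operator `Δu + k grad div u`, as a linear form. Unlike the
coordinate expression `lameOp`, it visibly commutes with similarities. -/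
def lameForm (k : ℝ) (u : Eu n → Eu n) (y : Eu n) : Eu n →L[ℝ] ℝ :=
  innerSL ℝ (Δ u y) + k • fderiv ℝ (divg u) y

lemma lameForm_eq_zero_iff (hu : ContDiffAt ℝ 2 u y) :
    lameForm k u y = 0 ↔ ∀ i, lameOp k (fun i z => u z i) i y = 0 := by
  have hsingle (i : Fin n) : lameForm k u y (EuclideanSpace.single i 1) =
      lameOp k (fun i z => u z i) i y := by
    have hdivg : pderiv i (fieldDiv fun i z => u z i) y =
        fderiv ℝ (divg u) y (EuclideanSpace.single i 1) := rfl
    simp [lameForm, lameOp, lapl_coord_eq_laplacian hu, hdivg, EuclideanSpace.inner_single_right]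
  refine ⟨fun h i => by rw [← hsingle, h, zero_apply], fun h => ?_⟩
  refine ContinuousLinearMap.coe_injective ((EuclideanSpace.basisFun (Fin n) ℝ).toBasis.ext ?_)
  simp [hsingle, h]

/-- The pullback of a vector field by a similarity, with values rotated back accordingly. -/
def similarityPullback (A : Eu n ≃ₗᵢ[ℝ] Eu n) (q : Eu n) (c : ℝ) (u : Eu n → Eu n) :
    Eu n → Eu n :=
  A.symm ∘ u ∘ similarity A q c

lemma contDiffAt_similarityPullback (hu : ContDiffAt ℝ 2 u (similarity A q c y)) :
    ContDiffAt ℝ 2 (similarityPullback A q c u) y :=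
  A.symm.contDiff.contDiffAt.comp y (hu.comp y contDiff_similarity.contDiffAt)

lemma divg_similarityPullback (hu : DifferentiableAt ℝ u (similarity A q c y)) :
    divg (similarityPullback A q c u) y = c * divg u (similarity A q c y) := by
  have hderiv : HasFDerivAt (similarityPullback A q c u) ((A.symm : Eu n →L[ℝ] Eu n).comp
      ((fderiv ℝ u (similarity A q c y)).comp (c • (A : Eu n →L[ℝ] Eu n)))) y :=
    (A.symm : Eu n →L[ℝ] Eu n).hasFDerivAt.comp y (hu.hasFDerivAt.comp y hasFDerivAt_similarity)
  have hconj : (fderiv ℝ (similarityPullback A q c u) y : Eu n →ₗ[ℝ] Eu n) =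
      c • A.symm.toLinearEquiv.conj (fderiv ℝ u (similarity A q c y) : Eu n →ₗ[ℝ] Eu n) := by
    ext v
    simp [hderiv.fderiv, LinearEquiv.conj_apply]
  rw [divg_eq_trace hderiv.differentiableAt, divg_eq_trace hu, hconj, map_smul,
    LinearMap.trace_conj', smul_eq_mul]

lemma lameForm_similarityPullback (hu : ContDiffAt ℝ 2 u (similarity A q c y)) :
    lameForm k (similarityPullback A q c u) y =
      c ^ 2 • (lameForm k u (similarity A q c y)).comp (A : Eu n →L[ℝ] Eu n) := by
  have hlaplacian : Δ (similarityPullback A q c u) y =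
      c ^ 2 • A.symm (Δ u (similarity A q c y)) := by
    rw [← map_smul, ← laplacian_comp_similarity hu]
    exact congrFun (laplacian_CLE_comp_left (l := A.symm.toContinuousLinearEquiv)) y
  have hdivg : divg (similarityPullback A q c u) =ᶠ[𝓝 y] c • (divg u ∘ similarity A q c) := by
    filter_upwards [eventually_contDiffAt_similarity hu] with z hz
    exact divg_similarityPullback (hz.differentiableAt two_ne_zero)
  have hdiff : DifferentiableAt ℝ (divg u) (similarity A q c y) :=
    (contDiffAt_fieldDiv fun i => (contDiffAt_piLp 2).1 hu i).differentiableAt one_ne_zero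
  have hgrad (v : Eu n) : fderiv ℝ (divg (similarityPullback A q c u)) y v =
      c ^ 2 * fderiv ℝ (divg u) (similarity A q c y) (A v) := by
    rw [hdivg.fderiv_eq, fderiv_const_smul_field, Pi.smul_apply, fderiv_comp_similarity hdiff]
    simp [sq, mul_assoc]
  ext v
  have hinner : ⟪A.symm (Δ u (similarity A q c y)), v⟫ = ⟪Δ u (similarity A q c y), A v⟫ := by
    rw [← A.inner_map_map, A.apply_symm_apply]
  simp [lameForm, hlaplacian, hgrad, hinner]
  ring

lemma lameOp_similarityPullback_eq_zero (hu : ContDiffAt ℝ 2 u (similarity A q c y))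
    (hlame : ∀ i, lameOp k (fun i z => u z i) i (similarity A q c y) = 0) (i : Fin n) :
    lameOp k (fun i z => similarityPullback A q c u z i) i y = 0 := by
  refine (lameForm_eq_zero_iff (contDiffAt_similarityPullback hu)).1 ?_ i
  rw [lameForm_similarityPullback hu, (lameForm_eq_zero_iff hu).2 hlame,
    ContinuousLinearMap.zero_comp, smul_zero]

end LameForm

section GeneralHalfSpace

variable {N : ℕ} {k M : ℝ} {u : Eu (N + 1) → Eu (N + 1)} {p x : Eu (N + 1)}

lemma exists_isometry_norm_smul_pole_eq {v : Eu (N + 1)} (hv : v ≠ 0) :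
    ∃ A : Eu (N + 1) ≃ₗᵢ[ℝ] Eu (N + 1), ‖v‖ • A (pole N) = v := by
  have horth : Orthonormal ℝ
      (Set.domRestrict ({0} : Set (Fin (N + 1))) fun _ => (‖v‖⁻¹ • v : Eu (N + 1))) :=
    ⟨fun _ => norm_smul_inv_norm hv, fun i j hij => absurd (Subsingleton.elim i j) hij⟩
  obtain ⟨b, hb⟩ := horth.exists_orthonormalBasis_extension_of_card_eq (by simp)
  refine ⟨b.repr.symm, ?_⟩
  rw [pole, b.repr_symm_single, hb 0 rfl, smul_inv_smul₀ (norm_ne_zero_iff.2 hv)]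

lemma inner_similarity_sub {A : Eu (N + 1) ≃ₗᵢ[ℝ] Eu (N + 1)} {v : Eu (N + 1)}
    (hA : ‖v‖ • A (pole N) = v) (p : Eu (N + 1)) (c : ℝ) (y : Eu (N + 1)) :
    ⟪v, similarity A (p + (‖v‖ - c) • A (pole N)) c y - p⟫ = ‖v‖ * (‖v‖ - c + c * y 0) := by
  have hpole (z : Eu (N + 1)) : ⟪A (pole N), A z⟫ = z 0 := by
    simp [A.inner_map_map, pole, EuclideanSpace.inner_single_left]
  calc ⟪v, similarity A (p + (‖v‖ - c) • A (pole N)) c y - p⟫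
      = ⟪‖v‖ • A (pole N), (‖v‖ - c) • A (pole N) + c • A y⟫ := by
        rw [hA, similarity, add_assoc, add_sub_cancel_left]
    _ = ‖v‖ * (‖v‖ - c + c * y 0) := by
        rw [real_inner_smul_left, inner_add_right, real_inner_smul_right, real_inner_smul_right,
          hpole, hpole, pole_zero, mul_one]

theorem norm_sub_mul_abs_divg_le (hN : 1 ≤ N) (hk : -1 < k) (hxp : x ≠ p)
    (hu : ∀ y, 0 < ⟪x - p, y - p⟫ → ContDiffAt ℝ 2 u y)
    (hlame : ∀ y, 0 < ⟪x - p, y - p⟫ → ∀ i, lameOp k (fun i z => u z i) i y = 0)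
    (hM : ∀ y, 0 < ⟪x - p, y - p⟫ → ‖u y‖ ≤ M) :
    ‖x - p‖ * |divg u x| ≤ Econst (N + 1) / (2 + k) * M := by
  have hd : 0 < ‖x - p‖ := norm_pos_iff.2 (sub_ne_zero.2 hxp)
  obtain ⟨A, hA⟩ := exists_isometry_norm_smul_pole_eq (sub_ne_zero.2 hxp)
  -- `abs_divg_pole_le` needs regularity up to the boundary, so the half-space is shrunk slightly.
  suffices hsmaller : ∀ c ∈ Set.Ioo 0 ‖x - p‖, c * |divg u x| ≤ Econst (N + 1) / (2 + k) * M from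
    le_of_tendsto (((continuous_mul_const _).tendsto _).mono_left nhdsWithin_le_nhds)
      (mem_of_superset (Ioo_mem_nhdsLT hd) hsmaller)
  rintro c ⟨hc, hcd⟩
  set q := p + (‖x - p‖ - c) • A (pole N) with hq
  have hx : similarity A q c (pole N) = x := by
    rw [similarity, hq, add_assoc, ← add_smul, sub_add_cancel, hA, add_sub_cancel]
  have hpos (y) (hy : 0 ≤ y 0) : 0 < ⟪x - p, similarity A q c y - p⟫ := by
    rw [hq, inner_similarity_sub hA]
    exact mul_pos hd (add_pos_of_pos_of_nonneg (sub_pos.2 hcd) (mul_nonneg hc.le hy))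
  have hbound := abs_divg_pole_le (u := similarityPullback A q c u) hN hk
    (fun y hy => contDiffAt_similarityPullback (hu _ (hpos y hy)))
    (fun y hy => lameOp_similarityPullback_eq_zero (hu _ (hpos y hy)) (hlame _ (hpos y hy)))
    (fun y hy => (A.symm.norm_map _).trans_le (hM _ (hpos y hy)))
  rwa [divg_similarityPullback ((hu _ (hpos _ pole_mem_halfSpace)).differentiableAt two_ne_zero),
    hx, abs_mul, abs_of_pos hc] at hbound

end GeneralHalfSpace

section Convex

lemma exists_mem_frontier_forall_inner_le_zero {E : Type*} [NormedAddCommGroup E]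
    [InnerProductSpace ℝ E] [FiniteDimensional ℝ E] {K : Set E} (hconv : Convex ℝ K)
    (hclosed : IsClosed K) (hne : K.Nonempty) {x : E} (hx : x ∉ K) :
    ∃ p ∈ frontier K, ∀ y ∈ K, ⟪x - p, y - p⟫ ≤ 0 := by
  obtain ⟨p, hp, hdist⟩ := exists_mem_frontier_infDist_compl_eq_dist (s := Kᶜ) hx
    (Set.compl_ne_univ.2 hne)
  rw [frontier_compl] at hp
  refine ⟨p, hp, (norm_eq_iInf_iff_real_inner_le_zero hconv (hclosed.frontier_subset hp)).1 ?_⟩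
  rw [← dist_eq_norm, ← hdist, compl_compl, infDist_eq_iInf]
  simp only [dist_eq_norm]

theorem abs_divg_le_div_infDist_frontier {n : ℕ} (hn : 2 ≤ n) {k : ℝ} (hk : -1 < k)
    {K : Set (Eu n)} (hconv : Convex ℝ K) (hclosed : IsClosed K) (hne : K.Nonempty)
    {u : Eu n → Eu n} (hu : ContDiffOn ℝ 2 u Kᶜ)
    (hlame : ∀ y ∉ K, ∀ i, lameOp k (fun i z => u z i) i y = 0)
    {M : ℝ} (hM : ∀ y ∉ K, ‖u y‖ ≤ M) {x : Eu n} (hx : x ∉ K) :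
    |divg u x| ≤ Econst n / (2 + k) * M / infDist x (frontier K) := by
  obtain ⟨N, rfl⟩ : ∃ N, n = N + 1 := ⟨n - 1, by omega⟩
  obtain ⟨p, hp, hsupport⟩ := exists_mem_frontier_forall_inner_le_zero hconv hclosed hne hx
  have hside (y) (hy : 0 < ⟪x - p, y - p⟫) : y ∉ K := fun h => hy.not_ge (hsupport y h)
  have hxp : x ≠ p := fun h => hx (h ▸ hclosed.frontier_subset hp)
  have hbound := norm_sub_mul_abs_divg_le (by omega) hk hxp
    (fun y hy => hu.contDiffAt (hclosed.isOpen_compl.mem_nhds (hside y hy)))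
    (fun y hy => hlame y (hside y hy)) (fun y hy => hM y (hside y hy))
  have hpos : 0 < infDist x (frontier K) :=
    (isClosed_frontier.notMem_iff_infDist_pos ⟨p, hp⟩).1 fun h => hx (hclosed.frontier_subset h)
  have hle : infDist x (frontier K) ≤ ‖x - p‖ :=
    (infDist_le_dist_of_mem hp).trans_eq (dist_eq_norm x p)
  rw [le_div_iff₀' hpos]
  exact (mul_le_mul_of_nonneg_right hle (abs_nonneg _)).trans hbound

end Convex

lemma neg_one_lt_inv_one_sub_two_mul {σ : ℝ} (hσ : σ < 1 / 2 ∨ 1 < σ) : -1 < (1 - 2 * σ)⁻¹ := by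
  rcases hσ with h | h
  · exact neg_one_lt_zero.trans (inv_pos.2 (by linarith))
  · rw [lt_inv_of_neg neg_one_lt_zero (by linarith)]
    linarith

theorem divergence_bound_lame_complement_convex_general
    {n : ℕ} (hn : 2 ≤ n) {σ : ℝ} (hσ : σ < 1 / 2 ∨ 1 < σ) {G Ω : Set (Eu n)}
    (hGc : Convex ℝ G) (hGne : G.Nonempty) (hΩ : Ω = (closure G)ᶜ)
    {u : Eu n → Eu n} (hreg : ContDiffOn ℝ 2 u Ω)
    (hlame : ∀ y ∈ Ω, ∀ j : Fin n,
      lapl (fun z => u z j) y +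
        (1 - 2 * σ)⁻¹ * fderiv ℝ (fun z => divg u z) y (EuclideanSpace.single j 1) = 0)
    {M : ℝ} (hM : ∀ y ∈ Ω, ‖u y‖ ≤ M) {x : Eu n} (hx : x ∈ Ω) :
    |divg u x| ≤ (1 - 2 * σ) * Econst n / ((3 - 4 * σ) * infDist x (frontier Ω)) * M := by
  subst hΩ
  have hbound := abs_divg_le_div_infDist_frontier hn (neg_one_lt_inv_one_sub_two_mul hσ)
    hGc.closure isClosed_closure hGne.closure hreg hlame hM hx
  have hne : 1 - 2 * σ ≠ 0 := by rcases hσ with h | h <;> intro h' <;> linarith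
  have hconst : 2 + (1 - 2 * σ)⁻¹ = (3 - 4 * σ) / (1 - 2 * σ) := by
    field_simp
    ring
  rw [hconst, ← frontier_compl] at hbound
  refine hbound.trans_eq ?_
  field_simp

/-- Let `n ≥ 2`, `σ ∈ (-∞, 1/2) ∪ (1, ∞)`, and `Ω = ℝⁿ \ Ḡ` with `G`
a convex domain in `ℝⁿ`. Let `u ∈ C²(Ω) ∩ C_b(Ω̄)` solve the Lamé system
`Δu + (1-2σ)⁻¹ grad div u = 0` in `Ω`, with `|u| ≤ M` on `Ω`. Then for every `x ∈ Ω`,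
`|div u(x)| ≤ ((1-2σ) Eₙ / ((3-4σ) d_x)) · sup_Ω |u| ≤ ((1-2σ) Eₙ / ((3-4σ) d_x)) M`. -/
theorem divergence_bound_lame_complement_convex
    (n : ℕ) (hn : 2 ≤ n) (σ : ℝ) (hσ : σ < 1 / 2 ∨ 1 < σ)
    (G Ω : Set (Eu n))
    (hGo : IsOpen G) (hGc : Convex ℝ G) (hGne : G.Nonempty)
    (hΩ : Ω = (closure G)ᶜ)
    (u : Eu n → Eu n)
    (hreg : ContDiffOn ℝ 2 u Ω) (hcont : ContinuousOn u (closure Ω))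
    (hlame : ∀ y ∈ Ω, ∀ j : Fin n,
      lapl (fun z => u z j) y +
        (1 - 2 * σ)⁻¹ * fderiv ℝ (fun z => divg u z) y (EuclideanSpace.single j 1) = 0)
    (M : ℝ) (hM : ∀ y ∈ Ω, ‖u y‖ ≤ M)
    (x : Eu n) (hx : x ∈ Ω) :
    |divg u x| ≤
      (1 - 2 * σ) * Econst n / ((3 - 4 * σ) * Metric.infDist x (frontier Ω)) * M := by
  exact divergence_bound_lame_complement_convex_general hn hσ hGc hGne hΩ hreg hlame hM hx
end
end

section
/- Let Ω be a domain in ℂ, and let ℜ(Ω) be the set of holomorphic functions f in Ω with sup_Ω |Re f| ≤ 1. Suppose a point ζ ∈ ∂Ω can be touched by an interior disk D ⊂ Ω (an open disk contained in Ω with ζ on its boundary). Then for every integer s ≥ 1, limsup_{z→ζ} sup_{f∈ℜ(Ω)} |z−ζ|^s · |f^{(s)}(z)| ≤ K_s, where z ranges over points of the radius of D directed from the center of D to ζ, and K_s = (s!/π) max_α ∫_{−π/2}^{π/2} |cos(α + (s+1)φ)| cos^{s−1}φ dφ. -/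
open Real Filter Metric
open scoped Real

noncomputable section

/-- The constant
`K_s = (s!/π) max_{α∈ℝ} ∫_{-π/2}^{π/2} |cos(α + (s+1)φ)| cos^{s-1}φ dφ`. -/
def Kconst (s : ℕ) : ℝ :=
  ((s.factorial : ℝ) / π) *
    ⨆ α : ℝ, ∫ t in (-(π / 2))..(π / 2),
      |Real.cos (α + ((s : ℝ) + 1) * t)| * Real.cos t ^ (s - 1)

/-!
Bol's lemma says that `D ^ (n + 1)` intertwines the Möbius actions of weight `-n` and `n + 2`:
for `φ w = (a * w + b) / (c * w + d)` the `(n + 1)`-st derivative of `(c * w + d) ^ n * f (φ w)`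
is `(a * d - b * c) ^ (n + 1) * f^{(n + 1)} (φ w) / (c * w + d) ^ (n + 2)`. Applied to a disc
automorphism carrying `0` to `z`, it turns `f^{(n + 1)} z` into the derivative at `0` of
`(ξ * w + 1) ^ n * g w` with `|ξ| < 1` and `|Re g| ≤ 1`.

This derivative is a polynomial in `ξ`, so by the maximum principle it is largest for `|ξ| = 1`.
By Cauchy's formula it is the average of `Re g` over a circle against the kernel
`2 * (n + 1)! * (ξ * w + 1) ^ n / w ^ (n + 1)`, since the contribution of `conj g` vanishes. For
`|ξ| = |w| = 1` we have `ξ * w + 1 = 2 * cos φ * exp (i * φ)` where `ξ * w = exp (2 * i * φ)`, and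
the integral defining `K_{n + 1}` appears. The outcome is the estimate
`(R ^ 2 - |z - c| ^ 2) ^ s * |f^{(s)} z| ≤ (2 * R) ^ s * K_s` throughout the disc `|z - c| < R`.
-/

open scoped ComplexConjugate

/-! ### Bol's lemma -/

section Bol

variable {𝕜 : Type*} [NontriviallyNormedField 𝕜]

theorem iteratedDeriv_succ_affine_mul {u : 𝕜 → 𝕜} {z : 𝕜} (c d : 𝕜) (n : ℕ)
    (hu : ContDiffAt 𝕜 (n + 1 : ℕ) u z) :
    iteratedDeriv (n + 1) (fun w => (c * w + d) * u w) z =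
      (c * z + d) * iteratedDeriv (n + 1) u z + (n + 1) * c * iteratedDeriv n u z := by
  have affine_one : iteratedDeriv 1 (fun w => c * w + d) = fun _ => c := by
    rw [iteratedDeriv_one]
    funext w
    simp [deriv_add_const]
  have affine_add_two (i : ℕ) : iteratedDeriv (i + 1 + 1) (fun w => c * w + d) z = 0 := by
    rw [iteratedDeriv_succ', ← iteratedDeriv_one, affine_one, iteratedDeriv_const]
    simp
  rw [iteratedDeriv_fun_mul (by fun_prop) hu, Finset.sum_range_succ', Finset.sum_range_succ']
  simp only [affine_add_two, zero_add, affine_one, iteratedDeriv_zero, mul_zero, zero_mul,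
    Finset.sum_const_zero, Nat.choose_one_right, Nat.choose_zero_right, Nat.add_sub_cancel,
    Nat.sub_zero]
  push_cast
  ring

theorem hasDerivAt_moebius (a b : 𝕜) {c d z : 𝕜} (hz : c * z + d ≠ 0) :
    HasDerivAt (fun w => (a * w + b) / (c * w + d)) ((a * d - b * c) / (c * z + d) ^ 2) z := by
  have affine (p q : 𝕜) : HasDerivAt (fun w => p * w + q) p z := by
    simpa using ((hasDerivAt_id z).const_mul p).add_const q
  refine ((affine a b).fun_div (affine c d) hz).congr_deriv ?_
  ring

variable {f : 𝕜 → 𝕜} {a b c d z : 𝕜}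

theorem hasDerivAt_comp_moebius (hz : c * z + d ≠ 0)
    (hf : DifferentiableAt 𝕜 f ((a * z + b) / (c * z + d))) :
    HasDerivAt (fun w => f ((a * w + b) / (c * w + d)))
      (deriv f ((a * z + b) / (c * z + d)) * ((a * d - b * c) / (c * z + d) ^ 2)) z :=
  hf.hasDerivAt.comp z (hasDerivAt_moebius a b hz)

theorem deriv_comp_moebius_div_pow (n : ℕ) (hz : c * z + d ≠ 0)
    (hf : DifferentiableAt 𝕜 f ((a * z + b) / (c * z + d))) :
    deriv (fun w => f ((a * w + b) / (c * w + d)) / (c * w + d) ^ (n + 1)) z =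
      (a * d - b * c) * deriv f ((a * z + b) / (c * z + d)) / (c * z + d) ^ (n + 3) -
      (n + 1) * c * f ((a * z + b) / (c * z + d)) / (c * z + d) ^ (n + 2) := by
  have denominator : HasDerivAt (fun w => (c * w + d) ^ (n + 1))
      ((n + 1 : ℕ) * (c * z + d) ^ n * c) z := by
    simpa using (((hasDerivAt_id z).const_mul c).add_const d).fun_pow (n + 1)
  rw [((hasDerivAt_comp_moebius hz hf).fun_div denominator (pow_ne_zero _ hz)).deriv]
  push_cast
  generalize c * z + d = q at hz ⊢
  field_simp
  ring

variable [CompleteSpace 𝕜]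

theorem iteratedDeriv_succ_pow_mul_comp_moebius (n : ℕ) (hz : c * z + d ≠ 0)
    (hf : AnalyticAt 𝕜 f ((a * z + b) / (c * z + d))) :
    iteratedDeriv (n + 1) (fun w => (c * w + d) ^ n * f ((a * w + b) / (c * w + d))) z =
      (a * d - b * c) ^ (n + 1) * iteratedDeriv (n + 1) f ((a * z + b) / (c * z + d)) /
        (c * z + d) ^ (n + 2) := by
  induction n generalizing z with
  | zero =>
    simp only [zero_add, pow_zero, one_mul, pow_one, iteratedDeriv_one]
    rw [(hasDerivAt_comp_moebius hz hf.differentiableAt).deriv]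
    ring
  | succ n ih =>
    set φ : 𝕜 → 𝕜 := fun w => (a * w + b) / (c * w + d)
    set u : 𝕜 → 𝕜 := fun w => (c * w + d) ^ n * f (φ w)
    have φ_analytic : AnalyticAt 𝕜 φ z := by fun_prop (disch := exact hz)
    have u_analytic : AnalyticAt 𝕜 u z :=
      (show AnalyticAt 𝕜 (fun w => (c * w + d) ^ n) z by fun_prop).mul
        (AnalyticAt.comp (f := φ) hf φ_analytic)
    have f_iter : DifferentiableAt 𝕜 (iteratedDeriv (n + 1) f) (φ z) := by
      rw [iteratedDeriv_eq_iterate]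
      exact (hf.iterated_deriv _).differentiableAt
    have ih_near : iteratedDeriv (n + 1) u =ᶠ[nhds z] fun w =>
        (a * d - b * c) ^ (n + 1) * (iteratedDeriv (n + 1) f (φ w) / (c * w + d) ^ (n + 2)) := by
      have denominator_ne : ∀ᶠ w in nhds z, c * w + d ≠ 0 :=
        (show ContinuousAt (fun w => c * w + d) z by fun_prop).eventually_ne hz
      filter_upwards [denominator_ne, φ_analytic.continuousAt.eventually hf.eventually_analyticAt]
        with w hw hfw
      rw [ih hw hfw, mul_div_assoc]
    have factor : (fun w => (c * w + d) ^ (n + 1) * f (φ w)) = fun w => (c * w + d) * u w := by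
      funext w
      ring
    rw [factor, iteratedDeriv_succ_affine_mul c d (n + 1) u_analytic.contDiffAt,
      iteratedDeriv_succ, ih_near.deriv_eq, ih_near.eq_of_nhds, deriv_const_mul_field,
      deriv_comp_moebius_div_pow (n + 1) hz f_iter, ← iteratedDeriv_succ]
    simp only [φ]
    push_cast
    field_simp
    ring

theorem differentiable_iteratedDeriv_mul_add_one_pow_mul {g : 𝕜 → 𝕜} (hg : AnalyticAt 𝕜 g 0)
    (k n : ℕ) :
    Differentiable 𝕜 fun ξ : 𝕜 => iteratedDeriv k (fun w => (ξ * w + 1) ^ n * g w) 0 := by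
  induction n generalizing k with
  | zero => simp
  | succ n ih =>
    cases k with
    | zero => simp
    | succ k =>
      have leibniz (ξ : 𝕜) : iteratedDeriv (k + 1) (fun w => (ξ * w + 1) ^ (n + 1) * g w) 0 =
          iteratedDeriv (k + 1) (fun w => (ξ * w + 1) ^ n * g w) 0 +
            (k + 1) * ξ * iteratedDeriv k (fun w => (ξ * w + 1) ^ n * g w) 0 := by
        have := iteratedDeriv_succ_affine_mul (z := 0) ξ 1 k
          (u := fun w => (ξ * w + 1) ^ n * g w) (AnalyticAt.contDiffAt (by fun_prop))
        simpa [pow_succ', mul_assoc] using this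
      simp only [leibniz]
      exact (ih (k + 1)).add (by fun_prop)

end Bol

/-! ### Derivatives as circle averages of the real part -/

theorem iteratedDeriv_eq_factorial_mul_circleAverage {G : ℂ → ℂ} {c : ℂ} {r : ℝ} (hr : 0 < r)
    (hG : DiffContOnCl ℂ G (ball c r)) (n : ℕ) :
    iteratedDeriv n G c = n.factorial * circleAverage (fun w => G w / (w - c) ^ n) c r := by
  have cauchy := hG.circleIntegral_one_div_sub_center_pow_smul hr n
  have integrand : (fun w => (w - c)⁻¹ • (G w / (w - c) ^ n)) =
      fun w => (1 / (w - c) ^ (n + 1)) • G w := by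
    funext w
    simp only [smul_eq_mul, div_eq_mul_inv, one_mul, pow_succ, mul_inv]
    ring
  rw [circleAverage_eq_circleIntegral hr.ne', integrand, cauchy]
  have factorial_ne : (n.factorial : ℂ) ≠ 0 := mod_cast n.factorial_ne_zero
  simp only [smul_eq_mul]
  field_simp

theorem conj_eq_sq_div_of_mem_sphere {r : ℝ} {w : ℂ} (hw : w ∈ sphere (0 : ℂ) r) :
    conj w = r ^ 2 / w := by
  have norm_w : ‖w‖ = r := by simpa using hw
  rcases eq_or_ne w 0 with rfl | hw0
  · simp
  · rw [eq_div_iff hw0, Complex.conj_mul', norm_w]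

section

variable {g : ℂ → ℂ} {r : ℝ}

theorem continuousOn_mul_add_one_pow_div_pow_succ (hr : r ≠ 0) (ξ : ℂ) (n : ℕ) :
    ContinuousOn (fun w : ℂ => (ξ * w + 1) ^ n / w ^ (n + 1)) (sphere 0 r) :=
  ContinuousOn.div (by fun_prop) (by fun_prop)
    fun _ hw => pow_ne_zero _ (ne_of_mem_sphere hw hr)

theorem circleAverage_conj_mul_pow_div_pow_succ (hr : 0 < r) (hg : DiffContOnCl ℂ g (ball 0 r))
    (ξ : ℂ) (n : ℕ) :
    circleAverage (fun w => conj (g w) * ((ξ * w + 1) ^ n / w ^ (n + 1))) 0 r = 0 := by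
  -- On the circle `conj w = r ^ 2 / w`, so the integrand is the conjugate of a holomorphic
  -- function vanishing at the centre.
  set h : ℂ → ℂ := fun w =>
    g w * (w * (conj ξ * r ^ 2 + w) ^ n / ((r : ℂ) ^ 2) ^ (n + 1)) with h_def
  have h_diff : DiffContOnCl ℂ h (ball 0 r) :=
    hg.smul (Differentiable.diffContOnCl (by fun_prop))
  have h_conj : Set.EqOn (fun w => conj (g w) * ((ξ * w + 1) ^ n / w ^ (n + 1)))
      (Complex.conjCLE.toContinuousLinearMap ∘ h) (sphere 0 |r|) := by
    intro w hw
    rw [abs_of_pos hr] at hw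
    have hw0 : w ≠ 0 := ne_of_mem_sphere hw hr.ne'
    have hr0 : (r : ℂ) ≠ 0 := mod_cast hr.ne'
    simp only [h_def, Function.comp_apply, ContinuousLinearEquiv.coe_coe,
      Complex.conjCLE_apply, map_mul, map_div₀, map_pow,
      map_add, Complex.conj_conj, Complex.conj_ofReal, conj_eq_sq_div_of_mem_sphere hw]
    rw [show ξ * (r : ℂ) ^ 2 + (r : ℂ) ^ 2 / w = r ^ 2 / w * (ξ * w + 1) by field_simp, mul_pow,
      div_pow]
    field_simp
    ring
  have h_integrable : CircleIntegrable h 0 r :=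
    (h_diff.continuousOn_ball.mono sphere_subset_closedBall).circleIntegrable hr.le
  rw [circleAverage_congr_sphere h_conj,
    Complex.conjCLE.toContinuousLinearMap.circleAverage_comp_comm h_integrable,
    DiffContOnCl.circleAverage (by rwa [abs_of_pos hr])]
  simp [h_def]

theorem iteratedDeriv_eq_circleAverage_re_mul (hr : 0 < r) (hg : DiffContOnCl ℂ g (ball 0 r))
    (ξ : ℂ) (n : ℕ) :
    iteratedDeriv (n + 1) (fun w => (ξ * w + 1) ^ n * g w) 0 =
      2 * (n + 1).factorial *
        circleAverage (fun w => ((g w).re : ℂ) * ((ξ * w + 1) ^ n / w ^ (n + 1))) 0 r := by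
  set kernel : ℂ → ℂ := fun w => (ξ * w + 1) ^ n / w ^ (n + 1)
  have g_cont : ContinuousOn g (sphere 0 r) := hg.continuousOn_ball.mono sphere_subset_closedBall
  have kernel_cont : ContinuousOn kernel (sphere 0 r) :=
    continuousOn_mul_add_one_pow_div_pow_succ hr.ne' ξ n
  have cauchy := iteratedDeriv_eq_factorial_mul_circleAverage hr
    (G := fun w => (ξ * w + 1) ^ n * g w)
    ((Differentiable.diffContOnCl (by fun_prop) : DiffContOnCl ℂ (fun w => (ξ * w + 1) ^ n) _).smul
      hg) (n + 1)
  have average_re : circleAverage (fun w => ((g w).re : ℂ) * kernel w) 0 r =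
      2⁻¹ * circleAverage (fun w => g w * kernel w) 0 r := by
    have split : (fun w => ((g w).re : ℂ) * kernel w) =
        (2⁻¹ : ℂ) • ((fun w => g w * kernel w) + fun w => conj (g w) * kernel w) := by
      funext w
      simp only [Pi.smul_apply, Pi.add_apply, smul_eq_mul, Complex.re_eq_add_conj]
      ring
    rw [split, circleAverage_smul, circleAverage_add,
      circleAverage_conj_mul_pow_div_pow_succ hr hg, add_zero, smul_eq_mul]
    · exact (g_cont.mul kernel_cont).circleIntegrable hr.le
    · exact ((Complex.continuous_conj.comp_continuousOn g_cont).mul kernel_cont).circleIntegrable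
        hr.le
  rw [cauchy, average_re]
  simp only [sub_zero, kernel, mul_div_right_comm, mul_comm (g _)]
  ring

end

theorem exists_norm_circleAverage_ofReal_mul_le {h : ℂ → ℝ} {k : ℂ → ℂ} {c : ℂ} {r : ℝ}
    (hh : ContinuousOn h (sphere c |r|)) (hk : ContinuousOn k (sphere c |r|))
    (h_le : ∀ w ∈ sphere c |r|, |h w| ≤ 1) :
    ∃ α : ℝ, ‖circleAverage (fun w => (h w : ℂ) * k w) c r‖ ≤
      circleAverage (fun w => |(Complex.exp (α * Complex.I) * k w).re|) c r := by
  set A := circleAverage (fun w => (h w : ℂ) * k w) c r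
  set u := Complex.exp ((-A.arg : ℝ) * Complex.I)
  refine ⟨-A.arg, ?_⟩
  have hk_rot : ContinuousOn (fun w => u * k w) (sphere c |r|) := by fun_prop
  have norm_eq : ‖A‖ = (u * A).re := by
    conv_rhs => rw [← Complex.norm_mul_exp_arg_mul_I A, mul_left_comm, ← Complex.exp_add]
    simp
  have rotate : (u * A).re = circleAverage (fun w => h w * (u * k w).re) c r := by
    have integrable : CircleIntegrable (fun w => u * (h w * k w)) c r := by
      refine ContinuousOn.circleIntegrable' ?_
      fun_prop
    have re_comm := Complex.reCLM.circleAverage_comp_comm integrable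
    have smul_comm := circleAverage_smul (a := u) (f := fun w => (h w : ℂ) * k w) (c := c) (R := r)
    simp only [smul_eq_mul, Pi.smul_def] at smul_comm
    rw [smul_comm] at re_comm
    rw [← Complex.reCLM_apply, ← re_comm]
    congr 1
    funext w
    simp only [Function.comp_apply, Complex.reCLM_apply, mul_left_comm u, Complex.re_ofReal_mul]
  rw [norm_eq, rotate]
  refine circleAverage_mono ?_ ?_ fun w hw => ?_
  · exact (hh.mul (Complex.continuous_re.comp_continuousOn hk_rot)).circleIntegrable'
  · exact (Complex.continuous_re.comp_continuousOn hk_rot).abs.circleIntegrable'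
  · calc h w * (u * k w).re ≤ |h w| * |(u * k w).re| :=
          (le_abs_self _).trans_eq (abs_mul _ _)
      _ ≤ |(u * k w).re| := mul_le_of_le_one_left (abs_nonneg _) (h_le w hw)

/-! ### The extremal integral -/

theorem circleAverage_eq_integral_two_mul_add {E : Type*} [NormedAddCommGroup E] [NormedSpace ℝ E]
    (F : ℂ → E) (c : ℂ) (r η : ℝ) :
    circleAverage F c r =
      π⁻¹ • ∫ φ in (-(π / 2))..(π / 2), F (circleMap c r (2 * φ + η)) := by
  rw [circleAverage_eq_integral_add (η - π),
    intervalIntegral.integral_comp_mul_add (fun θ => F (circleMap c r θ)) two_ne_zero η,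
    intervalIntegral.integral_comp_add_right (fun θ => F (circleMap c r θ)), smul_smul]
  congr 1
  · ring
  · congr 1 <;> ring

theorem bddAbove_range_integral_abs_cos_mul_cos_pow (s : ℕ) :
    BddAbove (Set.range fun α : ℝ => ∫ t in (-(π / 2))..(π / 2),
      |Real.cos (α + ((s : ℝ) + 1) * t)| * Real.cos t ^ (s - 1)) := by
  refine ⟨1 * |π / 2 - -(π / 2)|, ?_⟩
  rintro _ ⟨α, rfl⟩
  refine (Real.le_norm_self _).trans
    (intervalIntegral.norm_integral_le_of_norm_le_const fun t _ => ?_)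
  rw [norm_mul, norm_pow, Real.norm_eq_abs, Real.norm_eq_abs, abs_abs]
  exact mul_le_one₀ (Real.abs_cos_le_one _) (by positivity)
    (pow_le_one₀ (abs_nonneg _) (Real.abs_cos_le_one _))

theorem factorial_div_pi_mul_integral_abs_cos_mul_cos_pow_le_Kconst (α : ℝ) (n : ℕ) :
    (n + 1).factorial / π * ∫ t in (-(π / 2))..(π / 2),
      |Real.cos (α + (n + 2) * t)| * Real.cos t ^ n ≤ Kconst (n + 1) := by
  have le_sup := le_ciSup (bddAbove_range_integral_abs_cos_mul_cos_pow (n + 1)) α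
  simp only [Nat.cast_add, Nat.cast_one, add_assoc, one_add_one_eq_two, Nat.add_sub_cancel]
    at le_sup
  rw [Kconst]
  simp only [Nat.cast_add, Nat.cast_one, add_assoc, one_add_one_eq_two, Nat.add_sub_cancel]
  gcongr

theorem exp_two_mul_mul_I_add_one (φ : ℝ) :
    Complex.exp ((2 * φ : ℝ) * Complex.I) + 1 =
      (2 * Real.cos φ : ℝ) * Complex.exp (φ * Complex.I) := by
  have double : Complex.exp ((2 * φ : ℝ) * Complex.I) =
      Complex.exp (φ * Complex.I) * Complex.exp (φ * Complex.I) := by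
    rw [← Complex.exp_add]
    push_cast
    ring_nf
  have cancel : Complex.exp (-φ * Complex.I) * Complex.exp (φ * Complex.I) = 1 := by
    rw [← Complex.exp_add]
    simp
  push_cast
  rw [Complex.two_cos, add_mul, cancel, ← double]
  push_cast
  rfl

theorem mul_add_one_pow_div_pow_succ_circleMap {r : ℝ} (hr : r ≠ 0) (β φ : ℝ) (n : ℕ) :
    (Complex.exp (β * Complex.I) / r * circleMap 0 r (2 * φ - β) + 1) ^ n /
        circleMap 0 r (2 * φ - β) ^ (n + 1) =
      ((2 * Real.cos φ) ^ n / r ^ (n + 1) : ℝ) *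
        Complex.exp (((n + 1) * β - (n + 2) * φ : ℝ) * Complex.I) := by
  have hr' : (r : ℂ) ≠ 0 := mod_cast hr
  have rotate : Complex.exp (β * Complex.I) / r * circleMap 0 r (2 * φ - β) =
      Complex.exp ((2 * φ : ℝ) * Complex.I) := by
    rw [circleMap_zero, div_mul_comm, mul_div_cancel_left₀ _ hr', ← Complex.exp_add]
    push_cast
    ring_nf
  have phase : Complex.exp (((n + 1) * β - (n + 2) * φ : ℝ) * Complex.I) =
      Complex.exp (φ * Complex.I) ^ n /
        Complex.exp ((2 * φ - β : ℝ) * Complex.I) ^ (n + 1) := by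
    rw [← Complex.exp_nat_mul, ← Complex.exp_nat_mul, ← Complex.exp_sub]
    push_cast
    ring_nf
  rw [rotate, exp_two_mul_mul_I_add_one, phase, circleMap_zero]
  push_cast
  rw [mul_pow, mul_pow _ _ (n + 1), mul_div_mul_comm]

theorem circleAverage_abs_re_exp_mul_pow_div_pow_succ {r : ℝ} (hr : 0 < r) (α β : ℝ) (n : ℕ) :
    circleAverage (fun w => |(Complex.exp (α * Complex.I) *
        ((Complex.exp (β * Complex.I) / r * w + 1) ^ n / w ^ (n + 1))).re|) 0 r =
      2 ^ n / r ^ (n + 1) / π * ∫ φ in (-(π / 2))..(π / 2),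
        |Real.cos (-(α + (n + 1) * β) + (n + 2) * φ)| * Real.cos φ ^ n := by
  have integrand (φ : ℝ) (hφ : φ ∈ Set.uIcc (-(π / 2)) (π / 2)) :
      |(Complex.exp (α * Complex.I) *
        ((Complex.exp (β * Complex.I) / r * circleMap 0 r (2 * φ + -β) + 1) ^ n /
          circleMap 0 r (2 * φ + -β) ^ (n + 1))).re| =
      2 ^ n / r ^ (n + 1) *
        (|Real.cos (-(α + (n + 1) * β) + (n + 2) * φ)| * Real.cos φ ^ n) := by
    rw [Set.uIcc_of_le (by linarith [pi_pos])] at hφ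
    have cos_nonneg : 0 ≤ Real.cos φ := Real.cos_nonneg_of_mem_Icc hφ
    rw [← sub_eq_add_neg, mul_add_one_pow_div_pow_succ_circleMap hr.ne', mul_left_comm,
      ← Complex.exp_add, ← add_mul, ← Complex.ofReal_add, Complex.re_ofReal_mul,
      Complex.exp_ofReal_mul_I_re, abs_mul, abs_of_nonneg (by positivity), mul_pow,
      ← Real.cos_neg (α + _)]
    ring_nf
  rw [circleAverage_eq_integral_two_mul_add _ 0 r (-β), intervalIntegral.integral_congr integrand,
    intervalIntegral.integral_const_mul, smul_eq_mul]
  ring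

theorem two_mul_factorial_mul_circleAverage_abs_re_le {r : ℝ} (hr : 0 < r) {ξ : ℂ}
    (hξ : ‖ξ‖ = r⁻¹) (α : ℝ) (n : ℕ) :
    2 * (n + 1).factorial * circleAverage (fun w => |(Complex.exp (α * Complex.I) *
        ((ξ * w + 1) ^ n / w ^ (n + 1))).re|) 0 r ≤ (2 / r) ^ (n + 1) * Kconst (n + 1) := by
  have polar : ξ = Complex.exp (ξ.arg * Complex.I) / r := by
    conv_lhs => rw [← Complex.norm_mul_exp_arg_mul_I ξ, hξ]
    rw [Complex.ofReal_inv, inv_mul_eq_div]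
  rw [polar, circleAverage_abs_re_exp_mul_pow_div_pow_succ hr]
  calc 2 * (n + 1).factorial * (2 ^ n / r ^ (n + 1) / π * ∫ φ in (-(π / 2))..(π / 2),
        |Real.cos (-(α + (n + 1) * ξ.arg) + (n + 2) * φ)| * Real.cos φ ^ n)
      = (2 / r) ^ (n + 1) * ((n + 1).factorial / π * ∫ φ in (-(π / 2))..(π / 2),
        |Real.cos (-(α + (n + 1) * ξ.arg) + (n + 2) * φ)| * Real.cos φ ^ n) := by
        rw [div_pow, pow_succ 2]
        ring
    _ ≤ (2 / r) ^ (n + 1) * Kconst (n + 1) := by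
        gcongr
        exact factorial_div_pi_mul_integral_abs_cos_mul_cos_pow_le_Kconst _ n

section

variable {g : ℂ → ℂ} {r : ℝ}

theorem norm_iteratedDeriv_mul_add_one_pow_mul_le_of_norm_eq_inv (hr : 0 < r)
    (hg : DiffContOnCl ℂ g (ball 0 r)) (hre : ∀ w ∈ sphere (0 : ℂ) r, |(g w).re| ≤ 1)
    {ξ : ℂ} (hξ : ‖ξ‖ = r⁻¹) (n : ℕ) :
    ‖iteratedDeriv (n + 1) (fun w => (ξ * w + 1) ^ n * g w) 0‖ ≤
      (2 / r) ^ (n + 1) * Kconst (n + 1) := by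
  have g_cont : ContinuousOn g (sphere 0 r) := hg.continuousOn_ball.mono sphere_subset_closedBall
  have kernel_cont := continuousOn_mul_add_one_pow_div_pow_succ hr.ne' ξ n
  rw [← abs_of_pos hr] at g_cont kernel_cont hre
  obtain ⟨α, hα⟩ := exists_norm_circleAverage_ofReal_mul_le
    (Complex.continuous_re.comp_continuousOn g_cont) kernel_cont hre
  rw [iteratedDeriv_eq_circleAverage_re_mul hr hg, norm_mul, norm_mul, Complex.norm_two,
    Complex.norm_natCast]
  refine le_trans ?_ (two_mul_factorial_mul_circleAverage_abs_re_le hr hξ α n)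
  gcongr
  exact hα

theorem norm_iteratedDeriv_mul_add_one_pow_mul_le_of_norm_le_inv (hr : 0 < r)
    (hg : DiffContOnCl ℂ g (ball 0 r)) (hre : ∀ w ∈ sphere (0 : ℂ) r, |(g w).re| ≤ 1)
    {ξ : ℂ} (hξ : ‖ξ‖ ≤ r⁻¹) (n : ℕ) :
    ‖iteratedDeriv (n + 1) (fun w => (ξ * w + 1) ^ n * g w) 0‖ ≤
      (2 / r) ^ (n + 1) * Kconst (n + 1) := by
  have hr_inv : r⁻¹ ≠ 0 := (inv_pos.2 hr).ne'
  have g_analytic : AnalyticAt ℂ g 0 := hg.differentiableOn.analyticAt (ball_mem_nhds 0 hr)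
  refine Complex.norm_le_of_forall_mem_frontier_norm_le (U := ball 0 r⁻¹) isBounded_ball
    (differentiable_iteratedDeriv_mul_add_one_pow_mul g_analytic (n + 1) n).diffContOnCl
    (fun ξ' hξ' => ?_) ?_
  · rw [frontier_ball 0 hr_inv, mem_sphere_zero_iff_norm] at hξ'
    exact norm_iteratedDeriv_mul_add_one_pow_mul_le_of_norm_eq_inv hr hg hre hξ' n
  · rwa [closure_ball 0 hr_inv, mem_closedBall_zero_iff]

theorem norm_iteratedDeriv_mul_add_one_pow_mul_le (hg : DifferentiableOn ℂ g (ball 0 1))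
    (hre : ∀ w ∈ ball (0 : ℂ) 1, |(g w).re| ≤ 1) {ξ : ℂ} (hξ : ‖ξ‖ ≤ 1) (n : ℕ) :
    ‖iteratedDeriv (n + 1) (fun w => (ξ * w + 1) ^ n * g w) 0‖ ≤ 2 ^ (n + 1) * Kconst (n + 1) := by
  have limit : Tendsto (fun r : ℝ => (2 / r) ^ (n + 1) * Kconst (n + 1)) (nhdsWithin 1 (Set.Iio 1))
      (nhds (2 ^ (n + 1) * Kconst (n + 1))) := by
    have : ContinuousAt (fun r : ℝ => (2 / r) ^ (n + 1) * Kconst (n + 1)) 1 := by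
      fun_prop (disch := norm_num)
    simpa using this.tendsto.mono_left nhdsWithin_le_nhds
  refine ge_of_tendsto limit ?_
  filter_upwards [Ioo_mem_nhdsLT (zero_lt_one (α := ℝ))] with r ⟨hr0, hr1⟩
  have closedBall_subset : closedBall (0 : ℂ) r ⊆ ball 0 1 := closedBall_subset_ball hr1
  exact norm_iteratedDeriv_mul_add_one_pow_mul_le_of_norm_le_inv hr0
    (hg.diffContOnCl_ball closedBall_subset)
    (fun w hw => hre w (closedBall_subset (sphere_subset_closedBall hw)))
    (hξ.trans (one_le_inv_iff₀.2 ⟨hr0, hr1.le⟩)) n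

end

/-! ### Transport to an arbitrary disc -/

theorem conj_mul_add_one_ne_zero {m p : ℂ} (hm : ‖m‖ < 1) (hp : ‖p‖ < 1) :
    conj p * m + 1 ≠ 0 := by
  intro h
  have : ‖conj p * m‖ = 1 := by rw [eq_neg_of_add_eq_zero_left h, norm_neg, norm_one]
  rw [norm_mul, RCLike.norm_conj] at this
  exact (mul_lt_one_of_nonneg_of_lt_one_left (norm_nonneg p) hp hm.le).ne this

theorem norm_add_div_conj_mul_add_one_lt_one {m p : ℂ} (hm : ‖m‖ < 1) (hp : ‖p‖ < 1) :
    ‖(m + p) / (conj p * m + 1)‖ < 1 := by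
  have identity : ‖conj p * m + 1‖ ^ 2 - ‖m + p‖ ^ 2 = (1 - ‖m‖ ^ 2) * (1 - ‖p‖ ^ 2) := by
    simp only [Complex.sq_norm, Complex.normSq_apply, Complex.add_re, Complex.add_im,
      Complex.mul_re, Complex.mul_im, Complex.conj_re, Complex.conj_im, Complex.one_re,
      Complex.one_im]
    ring
  have defect_pos {x : ℂ} (hx : ‖x‖ < 1) : 0 < 1 - ‖x‖ ^ 2 :=
    sub_pos.2 (pow_lt_one₀ (norm_nonneg x) hx two_ne_zero)
  rw [norm_div, div_lt_one (norm_pos_iff.2 (conj_mul_add_one_ne_zero hm hp))]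
  refine lt_of_pow_lt_pow_left₀ 2 (norm_nonneg _) ?_
  linarith [mul_pos (defect_pos hm) (defect_pos hp)]

theorem moebius_mem_ball (c : ℂ) {R : ℝ} (hR : 0 < R) {m p : ℂ} (hm : ‖m‖ < 1) (hp : ‖p‖ < 1) :
    ((R + c * conj p) * m + (c + R * p)) / (conj p * m + 1) ∈ ball c R := by
  have sub_center : ((R + c * conj p) * m + (c + R * p)) / (conj p * m + 1) - c =
      R * ((m + p) / (conj p * m + 1)) := by
    have := conj_mul_add_one_ne_zero hm hp
    field_simp
    ring
  rw [mem_ball_iff_norm, sub_center, norm_mul, Complex.norm_of_nonneg hR.le]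
  exact mul_lt_of_lt_one_right hR (norm_add_div_conj_mul_add_one_lt_one hm hp)

section

variable {f : ℂ → ℂ} {c : ℂ} {R : ℝ}

theorem pow_mul_norm_iteratedDeriv_add_mul_le (hR : 0 < R) (hf : DifferentiableOn ℂ f (ball c R))
    (hre : ∀ w ∈ ball c R, |(f w).re| ≤ 1) {p : ℂ} (hp : ‖p‖ < 1) (n : ℕ) :
    (R * (1 - ‖p‖ ^ 2)) ^ (n + 1) * ‖iteratedDeriv (n + 1) f (c + R * p)‖ ≤
      2 ^ (n + 1) * Kconst (n + 1) := by
  set ψ : ℂ → ℂ := fun m => ((R + c * conj p) * m + (c + R * p)) / (conj p * m + 1)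
  have ψ_zero : ψ 0 = c + R * p := by simp [ψ]
  have ψ_mapsTo : Set.MapsTo ψ (ball 0 1) (ball c R) := fun m hm =>
    moebius_mem_ball c hR (mem_ball_zero_iff.1 hm) hp
  have ψ_diff : DifferentiableOn ℂ ψ (ball 0 1) := fun m hm => by
    have denominator_ne := conj_mul_add_one_ne_zero (mem_ball_zero_iff.1 hm) hp
    exact DifferentiableAt.differentiableWithinAt (by fun_prop (disch := exact denominator_ne))
  have f_analytic : AnalyticAt ℂ f (ψ 0) :=
    hf.analyticAt (isOpen_ball.mem_nhds (ψ_mapsTo (mem_ball_self one_pos)))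
  have bol : iteratedDeriv (n + 1) (fun m => (conj p * m + 1) ^ n * f (ψ m)) 0 =
      (R * (1 - ‖p‖ ^ 2) : ℝ) ^ (n + 1) * iteratedDeriv (n + 1) f (c + R * p) := by
    have det : (R + c * conj p) * 1 - (c + R * p) * conj p = (R * (1 - ‖p‖ ^ 2) : ℝ) := by
      push_cast
      rw [← Complex.mul_conj']
      ring
    rw [iteratedDeriv_succ_pow_mul_comp_moebius n (by simp) f_analytic, det, ← ψ_zero]
    simp [ψ]
  have bound := norm_iteratedDeriv_mul_add_one_pow_mul_le (hf.comp ψ_diff ψ_mapsTo)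
    (fun m hm => hre _ (ψ_mapsTo hm)) ((RCLike.norm_conj p).trans_le hp.le) n
  have det_nonneg : 0 ≤ R * (1 - ‖p‖ ^ 2) :=
    mul_nonneg hR.le (sub_nonneg.2 (pow_le_one₀ (norm_nonneg p) hp.le))
  simp only [Function.comp_apply] at bound
  rwa [bol, norm_mul, norm_pow, Complex.norm_of_nonneg det_nonneg] at bound

theorem pow_mul_norm_iteratedDeriv_le_of_mem_ball (hR : 0 < R)
    (hf : DifferentiableOn ℂ f (ball c R)) (hre : ∀ w ∈ ball c R, |(f w).re| ≤ 1)
    {z : ℂ} (hz : z ∈ ball c R) (n : ℕ) :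
    (R ^ 2 - dist z c ^ 2) ^ (n + 1) * ‖iteratedDeriv (n + 1) f z‖ ≤
      (2 * R) ^ (n + 1) * Kconst (n + 1) := by
  have hR' : (R : ℂ) ≠ 0 := mod_cast hR.ne'
  have norm_p : ‖(z - c) / R‖ = dist z c / R := by
    rw [norm_div, Complex.norm_of_nonneg hR.le, dist_eq_norm]
  have hp : ‖(z - c) / R‖ < 1 := by rwa [norm_p, div_lt_one hR]
  have bound := pow_mul_norm_iteratedDeriv_add_mul_le hR hf hre hp n
  rw [norm_p, mul_div_cancel₀ _ hR', add_sub_cancel] at bound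
  calc (R ^ 2 - dist z c ^ 2) ^ (n + 1) * ‖iteratedDeriv (n + 1) f z‖
      = R ^ (n + 1) * ((R * (1 - (dist z c / R) ^ 2)) ^ (n + 1) *
          ‖iteratedDeriv (n + 1) f z‖) := by
        rw [← mul_assoc, ← mul_pow]
        field_simp
    _ ≤ R ^ (n + 1) * (2 ^ (n + 1) * Kconst (n + 1)) := by gcongr
    _ = (2 * R) ^ (n + 1) * Kconst (n + 1) := by ring

theorem dist_pow_mul_norm_iteratedDeriv_radius_le (hR : 0 < R)
    (hf : DifferentiableOn ℂ f (ball c R)) (hre : ∀ w ∈ ball c R, |(f w).re| ≤ 1)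
    {ζ : ℂ} (hζ : ζ ∈ sphere c R) {t : ℝ} (ht₀ : -1 < t) (ht₁ : t < 1) (n : ℕ) :
    dist (c + t • (ζ - c)) ζ ^ (n + 1) * ‖iteratedDeriv (n + 1) f (c + t • (ζ - c))‖ ≤
      (2 / (1 + t)) ^ (n + 1) * Kconst (n + 1) := by
  set z := c + t • (ζ - c) with z_def
  have norm_radius : ‖ζ - c‖ = R := mem_sphere_iff_norm.1 hζ
  have dist_center : dist z c = |t| * R := by
    rw [dist_eq_norm, z_def, add_sub_cancel_left, norm_smul, norm_radius, Real.norm_eq_abs]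
  have dist_boundary : dist z ζ = (1 - t) * R := by
    rw [dist_comm, dist_eq_norm, ← norm_radius, ← Real.norm_of_nonneg (sub_nonneg.2 ht₁.le),
      ← norm_smul, z_def, sub_smul, one_smul, sub_sub]
  have hz : z ∈ ball c R := by
    rw [mem_ball, dist_center]
    exact mul_lt_of_lt_one_left hR (abs_lt.2 ⟨ht₀, ht₁⟩)
  have ht_pos : 0 < 1 + t := by linarith
  have factor : dist z ζ = (R ^ 2 - dist z c ^ 2) / (R * (1 + t)) := by
    rw [dist_boundary, dist_center, mul_pow, sq_abs]
    field_simp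
    ring
  calc dist z ζ ^ (n + 1) * ‖iteratedDeriv (n + 1) f z‖
      = (R ^ 2 - dist z c ^ 2) ^ (n + 1) * ‖iteratedDeriv (n + 1) f z‖ /
          (R * (1 + t)) ^ (n + 1) := by
        rw [factor, div_pow]
        ring
    _ ≤ (2 * R) ^ (n + 1) * Kconst (n + 1) / (R * (1 + t)) ^ (n + 1) :=
        div_le_div_of_nonneg_right
          (pow_mul_norm_iteratedDeriv_le_of_mem_ball hR hf hre hz n) (by positivity)
    _ = (2 / (1 + t)) ^ (n + 1) * Kconst (n + 1) := by
        rw [mul_div_right_comm, ← div_pow]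
        field_simp

end

theorem limsup_derivative_holomorphic_interior_disk_general
    (Ω : Set ℂ) (c ζ : ℂ) (R : ℝ) (hR : 0 < R) (hdisk : ball c R ⊆ Ω) (hζ : ζ ∈ sphere c R)
    (s : ℕ) (hs : 1 ≤ s) (ε : ℝ) (hε : 0 < ε) :
    ∃ δ > 0, ∀ t : ℝ, 1 - δ < t → t < 1 →
      ∀ f : ℂ → ℂ, DifferentiableOn ℂ f Ω → (∀ w ∈ Ω, |(f w).re| ≤ 1) →
        dist (c + t • (ζ - c)) ζ ^ s * ‖iteratedDeriv s f (c + t • (ζ - c))‖ ≤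
          Kconst s + ε := by
  obtain ⟨n, rfl⟩ := Nat.exists_eq_add_of_le' hs
  have majorant_continuous :
      ContinuousAt (fun t : ℝ => (2 / (1 + t)) ^ (n + 1) * Kconst (n + 1)) 1 := by
    fun_prop (disch := norm_num)
  have majorant_one : (2 / (1 + 1) : ℝ) ^ (n + 1) * Kconst (n + 1) < Kconst (n + 1) + ε := by
    norm_num [hε]
  obtain ⟨δ, hδ, majorant_lt⟩ :=
    Metric.eventually_nhds_iff.1 (majorant_continuous.eventually_lt_const majorant_one)
  refine ⟨min δ 1, by positivity, fun t htδ ht₁ f hf hre => ?_⟩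
  have htδ' : dist t 1 < δ := by
    rw [Real.dist_eq, abs_sub_comm, abs_of_pos (sub_pos.2 ht₁)]
    linarith [min_le_left δ 1]
  have ht₀ : -1 < t := by linarith [min_le_right δ 1]
  exact (dist_pow_mul_norm_iteratedDeriv_radius_le hR (hf.mono hdisk)
    (fun w hw => hre w (hdisk hw)) hζ ht₀ ht₁ n).trans (majorant_lt htδ').le

/-- Let `Ω ⊂ ℂ` be a domain and suppose `ζ ∈ ∂Ω` is touched by an
interior disk `D = ball c R ⊆ Ω`. Then for every `s ≥ 1`, along the radius
`z_t = c + t(ζ - c)`, `limsup_{z→ζ} sup_{f ∈ ℜ(Ω)} |z-ζ|^s |f^{(s)}(z)| ≤ K_s`,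
where `ℜ(Ω)` is the set of holomorphic functions on `Ω` with `sup_Ω |Re f| ≤ 1`:
for every `ε > 0` there is `δ > 0` such that for all `t ∈ (1-δ, 1)` and all
`f ∈ ℜ(Ω)`, `|z_t - ζ|^s |f^{(s)}(z_t)| ≤ K_s + ε`. -/
theorem limsup_derivative_holomorphic_interior_disk
    (Ω : Set ℂ) (hΩo : IsOpen Ω) (hΩc : IsConnected Ω)
    (c ζ : ℂ) (R : ℝ) (hR : 0 < R)
    (hdisk : Metric.ball c R ⊆ Ω) (hζs : ζ ∈ Metric.sphere c R) (hζ : ζ ∈ frontier Ω)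
    (s : ℕ) (hs : 1 ≤ s) (ε : ℝ) (hε : 0 < ε) :
    ∃ δ > 0, ∀ t : ℝ, 1 - δ < t → t < 1 →
      ∀ f : ℂ → ℂ, DifferentiableOn ℂ f Ω → (∀ w ∈ Ω, |(f w).re| ≤ 1) →
        dist (c + t • (ζ - c)) ζ ^ s * ‖iteratedDeriv s f (c + t • (ζ - c))‖ ≤
          Kconst s + ε :=
  limsup_derivative_holomorphic_interior_disk_general Ω c ζ R hR hdisk hζs s hs ε hε
end
end
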